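/- arXiv:math/0411009 — 2 statements merged into one kernel-verified Lean document; each statement's English description precedes it below -/
import Mathlib

section
/- Every finite simple graph with no K_6 minor (in particular, every linklessly embeddable graph) is generically 4-stress free. -/
open scoped Classical

/-- `H` is a minor of `G`: there is a family of pairwise disjoint nonempty connected
"branch sets" in `G`, one for each vertex of `H`, such that every edge of `H` is
realized by an edge of `G` between the corresponding branch sets. -/
def HasMinor {V W : Type*} (G : SimpleGraph V) (H : SimpleGraph W) : Prop :=
  ∃ B : W → Set V,
    (∀ i, (B i).Nonempty) ∧
    (∀ i j, i ≠ j → Disjoint (B i) (B j)) ∧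
    (∀ i, (G.induce (B i)).Connected) ∧
    (∀ i j, H.Adj i j → ∃ x ∈ B i, ∃ y ∈ B j, G.Adj x y)

/-- `w : E(G) → ℝ` is a stress of the embedding `f : V → ℝ^d`. -/
noncomputable def IsStress {V : Type*} [Fintype V] (G : SimpleGraph V) (d : ℕ)
    (f : V → EuclideanSpace ℝ (Fin d)) (w : G.edgeSet → ℝ) : Prop :=
  ∀ v : V,
    (∑ u : V, if h : G.Adj v u then w ⟨s(v, u), G.mem_edgeSet.mpr h⟩ • (f v - f u) else 0) = 0

/-- The set of `d`-embeddings of `G` whose only stress is the zero function. -/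
def StressFreeEmbeddings {V : Type*} [Fintype V] (G : SimpleGraph V) (d : ℕ) :
    Set (V → EuclideanSpace ℝ (Fin d)) :=
  {f | ∀ w : G.edgeSet → ℝ, IsStress G d f w → w = 0}

/-- `G` is generically `d`-stress free: the set of `d`-embeddings with no nonzero
stress is open and dense in the space of all `d`-embeddings. -/
def GenericallyStressFree {V : Type*} [Fintype V] (G : SimpleGraph V) (d : ℕ) : Prop :=
  IsOpen (StressFreeEmbeddings G d) ∧ Dense (StressFreeEmbeddings G d)


/-- If `B₀` is injective then `A₀ + t B₀` is injective for all but finitely many `t`. -/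
lemma finite_bad {A B : Type*} [AddCommGroup A] [Module ℝ A] [FiniteDimensional ℝ A]
    [AddCommGroup B] [Module ℝ B] (A₀ B₀ : A →ₗ[ℝ] B) (hB : Function.Injective B₀) :
    {t : ℝ | ¬ Function.Injective (A₀ + t • B₀)}.Finite := by
  obtain ⟨L, hL⟩ := B₀.exists_leftInverse_of_injective (LinearMap.ker_eq_bot.mpr hB)
  set N : A →ₗ[ℝ] A := -(L ∘ₗ A₀) with hN
  refine (N.charpoly.rootSet_finite ℝ).subset ?_
  intro t ht
  rw [Polynomial.mem_rootSet]
  refine ⟨N.charpoly_monic.ne_zero, ?_⟩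
  by_contra hne
  apply ht
  have h1 : LinearMap.det (algebraMap ℝ (Module.End ℝ A) t - N) ≠ 0 := by
    rw [← LinearMap.eval_charpoly]
    simpa [Polynomial.aeval_def, Polynomial.eval₂_eq_eval_map] using hne
  have h2 : (algebraMap ℝ (Module.End ℝ A) t - N) = L ∘ₗ (A₀ + t • B₀) := by
    rw [LinearMap.comp_add, LinearMap.comp_smul, hL, hN]
    ext x
    simp [Algebra.algebraMap_eq_smul_one, add_comm]
  have h3 : Function.Injective (L ∘ₗ (A₀ + t • B₀)) := by
    rw [← h2]
    have := (LinearMap.isUnit_iff_isUnit_det _).mpr (isUnit_iff_ne_zero.mpr h1)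
    exact ((Module.End.isUnit_iff _).mp this).1
  intro x y hxy
  apply h3
  simp only [LinearMap.comp_apply]
  rw [hxy]

lemma exists_inj_perturb {A B : Type*} [AddCommGroup A] [Module ℝ A] [FiniteDimensional ℝ A]
    [AddCommGroup B] [Module ℝ B] (A₀ B₀ : A →ₗ[ℝ] B) (hB : Function.Injective B₀) :
    ∃ t : ℝ, t ≠ 0 ∧ Function.Injective (B₀ + t • A₀) := by
  have hf := ((finite_bad A₀ B₀ hB).insert 0).infinite_compl.nonempty
  obtain ⟨t, ht⟩ := hf
  simp only [Set.mem_compl_iff, Set.mem_insert_iff, Set.mem_setOf_eq, not_or, not_not] at ht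
  obtain ⟨h0, hinj⟩ := ht
  refine ⟨t⁻¹, inv_ne_zero h0, ?_⟩
  intro x y hxy
  apply hinj
  have := congrArg (fun z => t • z) hxy
  simpa [smul_smul, h0, add_comm] using this

lemma isOpen_inj {F A B : Type*} [NormedAddCommGroup F] [NormedSpace ℝ F] [FiniteDimensional ℝ F]
    [AddCommGroup A] [Module ℝ A] [FiniteDimensional ℝ A]
    [AddCommGroup B] [Module ℝ B] (R : F →ₗ[ℝ] A →ₗ[ℝ] B) :
    IsOpen {f | Function.Injective (R f)} := by
  rw [isOpen_iff_mem_nhds]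
  intro f₀ hf₀
  obtain ⟨L, hL⟩ := (R f₀).exists_leftInverse_of_injective (LinearMap.ker_eq_bot.mpr hf₀)
  let b := Module.finBasis ℝ A
  let T : F →ₗ[ℝ] Matrix (Fin (Module.finrank ℝ A)) (Fin (Module.finrank ℝ A)) ℝ :=
    (LinearMap.toMatrix b b).toLinearMap ∘ₗ (LinearMap.llcomp ℝ A B A L) ∘ₗ R
  have hT : Continuous fun f => (T f).det :=
    Continuous.matrix_det (LinearMap.continuous_of_finiteDimensional T)
  have hT0 : (T f₀).det ≠ 0 := by
    have : T f₀ = 1 := by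
      show LinearMap.toMatrix b b (L ∘ₗ R f₀) = 1
      rw [hL, LinearMap.toMatrix_id]
    rw [this]; simp
  filter_upwards [hT.continuousAt.eventually_ne hT0] with f hf
  have h1 : LinearMap.det (L ∘ₗ R f) ≠ 0 := by
    rw [← LinearMap.det_toMatrix b]; exact hf
  have := (LinearMap.isUnit_iff_isUnit_det _).mpr (isUnit_iff_ne_zero.mpr h1)
  have h3 := ((Module.End.isUnit_iff _).mp this).1
  intro x y hxy
  apply h3
  simp only [LinearMap.comp_apply]
  rw [hxy]

lemma dense_inj {F A B : Type*} [NormedAddCommGroup F] [NormedSpace ℝ F]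
    [AddCommGroup A] [Module ℝ A] [FiniteDimensional ℝ A]
    [AddCommGroup B] [Module ℝ B] (R : F →ₗ[ℝ] A →ₗ[ℝ] B) (f₀ : F)
    (hf₀ : Function.Injective (R f₀)) :
    Dense {f | Function.Injective (R f)} := by
  intro f
  have hd : Dense ({t : ℝ | ¬ Function.Injective (R f + t • R f₀)}ᶜ) :=
    (finite_bad (R f) (R f₀) hf₀).countable.dense_compl ℝ
  have hc : Continuous fun t : ℝ => f + t • f₀ := by fun_prop
  have h0 : (0 : ℝ) ∈ closure ({t : ℝ | ¬ Function.Injective (R f + t • R f₀)}ᶜ) := hd 0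
  have := map_mem_closure hc h0 (t := {f | Function.Injective (R f)}) (by
    intro t ht
    simp only [Set.mem_compl_iff, Set.mem_setOf_eq, not_not] at ht
    simpa using ht)
  simpa using this


/-- Shorthand for four-dimensional Euclidean space. -/
abbrev E4 := EuclideanSpace ℝ (Fin 4)

/-- Symmetric weights supported on the edges of `G`. -/
def symW {V : Type*} (G : SimpleGraph V) : Submodule ℝ (V → V → ℝ) where
  carrier := {ω | (∀ x y, ω x y = ω y x) ∧ ∀ x y, ¬ G.Adj x y → ω x y = 0}
  add_mem' := by
    rintro a b ⟨h1, h2⟩ ⟨h3, h4⟩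
    refine ⟨fun x y => by simp [h1 x y, h3 x y], fun x y h => by simp [h2 x y h, h4 x y h]⟩
  zero_mem' := by simp
  smul_mem' := by
    rintro c a ⟨h1, h2⟩
    refine ⟨fun x y => by simp [h1 x y], fun x y h => by simp [h2 x y h]⟩

lemma mem_symW {V : Type*} {G : SimpleGraph V} {ω : V → V → ℝ} :
    ω ∈ symW G ↔ (∀ x y, ω x y = ω y x) ∧ ∀ x y, ¬ G.Adj x y → ω x y = 0 := Iff.rfl

/-- The bilinear force map. -/
noncomputable def forceMap {V : Type*} [Fintype V] (G : SimpleGraph V) :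
    (V → V → E4) →ₗ[ℝ] symW G →ₗ[ℝ] (V → E4) :=
  LinearMap.mk₂ ℝ (fun g ω x => ∑ y, ω.1 x y • g x y)
    (by intro a b c; ext1 x; simp [Finset.sum_add_distrib])
    (by intro a b c; ext1 x; simp [Finset.smul_sum, smul_smul, mul_comm])
    (by intro a b c; ext1 x; simp [Finset.sum_add_distrib, add_smul])
    (by intro a b c; ext1 x; simp [Finset.smul_sum, smul_smul])

lemma forceMap_apply {V : Type*} [Fintype V] (G : SimpleGraph V) (g : V → V → E4) (ω : symW G)
    (x : V) : forceMap G g ω x = ∑ y, ω.1 x y • g x y := rfl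

/-- The differences of a map as a linear function. -/
def diffMap (V : Type*) : (V → E4) →ₗ[ℝ] (V → V → E4) where
  toFun f x y := f x - f y
  map_add' := by intro a b; ext1 x; ext1 y; simp; abel
  map_smul' := by intro a b; ext1 x; ext1 y; simp [smul_sub]

/-- `f` has no nonzero stress (symmetric-function version). -/
def SF {V : Type*} [Fintype V] (G : SimpleGraph V) (f : V → E4) : Prop :=
  ∀ ω ∈ symW G, (∀ x, ∑ y, ω x y • (f x - f y) = 0) → ω = 0

lemma sf_iff_inj {V : Type*} [Fintype V] (G : SimpleGraph V) (f : V → E4) :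
    SF G f ↔ Function.Injective ((forceMap G ∘ₗ diffMap V) f) := by
  rw [← LinearMap.ker_eq_bot, LinearMap.ker_eq_bot']
  constructor
  · intro h ω hω
    exact Subtype.ext (h ω.1 ω.2 (fun x => congrFun hω x))
  · intro h ω hω hs
    have := h ⟨ω, hω⟩ (funext hs)
    exact congrArg Subtype.val this

lemma sf_iff_mem {V : Type*} [Fintype V] (G : SimpleGraph V) (f : V → E4) :
    f ∈ StressFreeEmbeddings G 4 ↔ SF G f := by
  constructor
  · intro h ω hω hs
    obtain ⟨h1, h2⟩ := mem_symW.mp hω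
    have key := h (fun e => Sym2.lift ⟨ω, h1⟩ e.1) (by
      intro v
      refine Eq.trans ?_ (hs v)
      refine Finset.sum_congr rfl fun u _ => ?_
      by_cases ha : G.Adj v u
      · simp [ha]
      · simp [ha, h2 v u ha])
    ext x y
    by_cases ha : G.Adj x y
    · have := congrFun key ⟨s(x, y), G.mem_edgeSet.mpr ha⟩
      simpa using this
    · simpa using h2 x y ha
  · intro h w hw
    have key := h (fun x y => if ha : G.Adj x y then w ⟨s(x, y), G.mem_edgeSet.mpr ha⟩ else 0) (by
      refine mem_symW.mpr ⟨fun x y => ?_, fun x y ha => by simp [ha]⟩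
      by_cases ha : G.Adj x y
      · have hb := ha.symm
        simp only [ha, hb, dite_true]
        congr 2
        exact Sym2.eq_swap
      · have hb : ¬ G.Adj y x := fun h => ha h.symm
        simp [ha, hb]) (by
      intro x
      rw [← hw x]
      refine Finset.sum_congr rfl fun u _ => ?_
      by_cases ha : G.Adj x u <;> simp [ha])
    ext ⟨e, he⟩
    induction e using Sym2.ind with
    | _ x y =>
      have ha : G.Adj x y := he
      have := congrFun (congrFun key x) y
      simpa [ha] using this

lemma sf_isOpen {V : Type*} [Fintype V] (G : SimpleGraph V) : IsOpen {f | SF G f} := by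
  have := isOpen_inj (forceMap G ∘ₗ diffMap V)
  simpa only [sf_iff_inj] using this

lemma sf_dense {V : Type*} [Fintype V] (G : SimpleGraph V) (h : ∃ f, SF G f) :
    Dense {f | SF G f} := by
  obtain ⟨f, hf⟩ := h
  have := dense_inj (forceMap G ∘ₗ diffMap V) f ((sf_iff_inj G f).mp hf)
  simpa only [sf_iff_inj] using this

lemma generically_of_exists {V : Type*} [Fintype V] (G : SimpleGraph V) (h : ∃ f, SF G f) :
    GenericallyStressFree G 4 := by
  have : StressFreeEmbeddings G 4 = {f | SF G f} := by
    ext f; exact sf_iff_mem G f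
  unfold GenericallyStressFree
  rw [this]
  exact ⟨sf_isOpen G, sf_dense G h⟩

lemma sf_mono {V : Type*} [Fintype V] {G H : SimpleGraph V} (hle : H ≤ G) {f : V → E4}
    (h : SF G f) : SF H f := by
  intro ω hω hs
  obtain ⟨h1, h2⟩ := mem_symW.mp hω
  exact h ω (mem_symW.mpr ⟨h1, fun x y ha => h2 x y (fun hb => ha (hle hb))⟩) hs

/-- Counting: a stress-free graph supported on `S` has at most `4|S| - 4` edges. -/
lemma sf_count {V : Type*} [Fintype V] {G : SimpleGraph V} {f : V → E4}
    (h : SF G f) (S : Finset V) (hS : S.Nonempty) (hsupp : ∀ x y, G.Adj x y → x ∈ S) :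
    ∑ x ∈ S, G.degree x + 8 ≤ 8 * S.card := by
  obtain ⟨s, hs⟩ := hS
  have h' := (sf_iff_mem G f).mpr h
  let T : (G.edgeSet → ℝ) →ₗ[ℝ] ({x // x ∈ S.erase s} → E4) :=
    { toFun := fun w v => ∑ u : V, if h : G.Adj v u then
          w ⟨s(v.1, u), G.mem_edgeSet.mpr h⟩ • (f v - f u) else 0
      map_add' := by
        intro a b
        ext1 x
        simp only [Pi.add_apply, ← Finset.sum_add_distrib]
        refine Finset.sum_congr rfl fun u _ => ?_
        split_ifs <;> simp [add_smul]
      map_smul' := by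
        intro c a
        ext1 x
        simp only [Pi.smul_apply, Finset.smul_sum]
        refine Finset.sum_congr rfl fun u _ => ?_
        split_ifs <;> simp [smul_smul] }
  have hT : Function.Injective T := by
    rw [← LinearMap.ker_eq_bot, LinearMap.ker_eq_bot']
    intro w hw
    apply h' w
    have h1 : ∀ v, v ≠ s → (∑ u : V, if h : G.Adj v u then
        w ⟨s(v, u), G.mem_edgeSet.mpr h⟩ • (f v - f u) else 0) = 0 := by
      intro v hv
      by_cases hvS : v ∈ S
      · exact congrFun hw ⟨v, Finset.mem_erase.mpr ⟨hv, hvS⟩⟩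
      · refine Finset.sum_eq_zero fun u _ => ?_
        rw [dif_neg]
        exact fun ha => hvS (hsupp _ _ ha)
    intro v
    by_cases hv : v = s
    · have htot : (∑ v : V, ∑ u : V, if h : G.Adj v u then
          w ⟨s(v, u), G.mem_edgeSet.mpr h⟩ • (f v - f u) else 0) = 0 := by
        set X := (∑ v : V, ∑ u : V, if h : G.Adj v u then
          w ⟨s(v, u), G.mem_edgeSet.mpr h⟩ • (f v - f u) else 0) with hX
        have : X = -X := by
          conv_lhs => rw [hX, Finset.sum_comm]
          rw [hX, ← Finset.sum_neg_distrib]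
          refine Finset.sum_congr rfl fun x _ => ?_
          rw [← Finset.sum_neg_distrib]
          refine Finset.sum_congr rfl fun y _ => ?_
          by_cases ha : G.Adj x y
          · have hb := ha.symm
            simp only [ha, hb, dite_true]
            have : (⟨s(y, x), G.mem_edgeSet.mpr hb⟩ : G.edgeSet) =
              ⟨s(x, y), G.mem_edgeSet.mpr ha⟩ := Subtype.ext Sym2.eq_swap
            rw [this, ← smul_neg, neg_sub]
          · have hb : ¬ G.Adj y x := fun h => ha h.symm
            simp [ha, hb]
        have h2 : (2 : ℝ) • X = 0 := by
          rw [two_smul]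
          nth_rewrite 1 [this]
          exact neg_add_cancel X
        exact (smul_eq_zero.mp h2).resolve_left two_ne_zero
      rw [Finset.sum_eq_single s (fun b _ hb => h1 b hb) (by simp)] at htot
      rw [hv]; exact htot
    · exact h1 v hv
  have hfin := LinearMap.finrank_le_finrank_of_injective hT
  rw [Module.finrank_fintype_fun_eq_card, Module.finrank_pi_fintype] at hfin
  simp only [finrank_euclideanSpace, Fintype.card_fin, Finset.sum_const, Finset.card_univ,
    Fintype.card_coe, smul_eq_mul] at hfin
  rw [Finset.card_erase_of_mem hs] at hfin
  have hsum : ∑ x ∈ S, G.degree x = ∑ x, G.degree x := by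
    refine Finset.sum_subset (Finset.subset_univ _) fun x _ hx => ?_
    rw [← G.card_neighborFinset_eq_degree, Finset.card_eq_zero]
    ext y
    simp only [SimpleGraph.mem_neighborFinset, Finset.notMem_empty, iff_false]
    exact fun ha => hx (hsupp _ _ ha)
  rw [hsum, G.sum_degrees_eq_twice_card_edges]
  have hE : G.edgeFinset.card = Fintype.card G.edgeSet := by
    rw [SimpleGraph.edgeFinset_card]
  have hpos : 0 < S.card := Finset.card_pos.mpr ⟨s, hs⟩
  rw [hE]
  omega


/-- Contraction of `v` into `u`, on the same vertex set (`v` becomes isolated). -/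
def contr {V : Type*} (G : SimpleGraph V) (u v : V) : SimpleGraph V where
  Adj a b := a ≠ b ∧ a ≠ v ∧ b ≠ v ∧ (G.Adj a b ∨ (a = u ∧ G.Adj v b) ∨ (b = u ∧ G.Adj a v))
  symm := ⟨by
    rintro a b ⟨h1, h2, h3, h4⟩
    refine ⟨h1.symm, h3, h2, ?_⟩
    rcases h4 with h | ⟨h, h'⟩ | ⟨h, h'⟩
    · exact Or.inl h.symm
    · exact Or.inr (Or.inr ⟨h, h'.symm⟩)
    · exact Or.inr (Or.inl ⟨h, h'.symm⟩)⟩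
  loopless := ⟨fun a h => h.1 rfl⟩

/-- The star differences at `u` as a linear family. -/
noncomputable def starMap {V : Type*} (u : V) (C : Finset V) :
    (V → E4) →ₗ[ℝ] (C → ℝ) →ₗ[ℝ] E4 :=
  LinearMap.mk₂ ℝ (fun f c => ∑ y, c y • (f u - f y))
    (by intro a b c; simp only [← Finset.sum_add_distrib, Pi.add_apply, ← smul_add]
        exact Finset.sum_congr rfl fun _ _ => by congr 1; abel)
    (by intro a b c
        simp only [Finset.smul_sum, Pi.smul_apply, ← smul_sub]
        exact Finset.sum_congr rfl fun _ _ => smul_comm _ _ _)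
    (by intro a b c; simp [Finset.sum_add_distrib, add_smul])
    (by intro a b c; simp [Finset.smul_sum, smul_smul])

lemma starMap_apply {V : Type*} (u : V) (C : Finset V) (f : V → E4) (c : C → ℝ) :
    starMap u C f c = ∑ y, c y • (f u - f y) := rfl

lemma starMap_exists {V : Type*} (u : V) (C : Finset V) (hu : u ∉ C)
    (hC : C.card ≤ 3) : ∃ f, Function.Injective (starMap u C f) := by
  have hle : Fintype.card C ≤ Fintype.card (Fin 4) := by simp; omega
  obtain ⟨e⟩ := Function.Embedding.nonempty_of_card_le hle
  refine ⟨fun x => if h : x ∈ C then - EuclideanSpace.single (e ⟨x, h⟩) (1 : ℝ) else 0, ?_⟩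
  rw [← LinearMap.ker_eq_bot, LinearMap.ker_eq_bot']
  intro c hc
  rw [starMap_apply] at hc
  ext y
  have := congrArg (fun z : E4 => z (e y)) hc
  simp only [hu, dite_false, Subtype.coe_prop, dite_true, zero_sub, neg_neg] at this
  simpa [Pi.single_apply, e.injective.eq_iff] using this

lemma exists_generic {V : Type*} [Fintype V] (G : SimpleGraph V) (h : ∃ f, SF G f)
    (u : V) (C : Finset V) (hu : u ∉ C) (hC : C.card ≤ 3) :
    ∃ f, SF G f ∧ Function.Injective (starMap u C f) := by
  obtain ⟨f₀, hf₀⟩ := starMap_exists u C hu hC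
  have hd := dense_inj (starMap u C) f₀ hf₀
  have ho := isOpen_inj (starMap u C)
  have hd' := (sf_dense G h).inter_of_isOpen_right hd ho
  obtain ⟨f, hf⟩ := hd'.nonempty
  exact ⟨f, hf.1, hf.2⟩

/-- Vertex splitting preserves generic stress-freeness. -/
lemma sf_of_contr {V : Type*} [Fintype V] (G : SimpleGraph V) (u v : V) (huv : G.Adj u v)
    (hC : (G.neighborFinset u ∩ G.neighborFinset v).card ≤ 3)
    (h : ∃ f, SF (contr G u v) f) : ∃ f, SF G f := by
  set C := G.neighborFinset u ∩ G.neighborFinset v with hCdef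
  have memC : ∀ y, y ∈ C ↔ G.Adj u y ∧ G.Adj v y := by intro y; simp [hCdef]
  have huC : u ∉ C := by simp [hCdef]
  have hne : u ≠ v := huv.ne
  obtain ⟨f', hf', hstar⟩ := exists_generic _ h u C huC hC
  -- a direction outside the span
  have hz : ∃ z, z ∉ LinearMap.range (starMap u C f') := by
    by_contra hcon
    push Not at hcon
    have htop : LinearMap.range (starMap u C f') = ⊤ := by
      rw [eq_top_iff]; intro z _; exact hcon z
    have h1 := LinearMap.finrank_range_le (starMap u C f')
    rw [htop, finrank_top] at h1
    simp at h1
    omega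
  obtain ⟨z, hz⟩ := hz
  let f : V → E4 := fun x => if x = v then f' u else f' x
  have fv : f v = f' u := by simp [f]
  have fo : ∀ x, x ≠ v → f x = f' x := by intro x hx; simp [f, hx]
  let ζ : V → E4 := fun x => if x = v then z else 0
  have ζv : ζ v = z := by simp [ζ]
  have ζo : ∀ x, x ≠ v → ζ x = 0 := by intro x hx; simp [ζ, hx]
  let isE : V → V → Prop := fun x y => (x = u ∧ y = v) ∨ (x = v ∧ y = u)
  let g₀ : V → V → E4 := fun x y => if isE x y then ζ x - ζ y else f x - f y
  let g₁ : V → V → E4 := fun x y => if isE x y then 0 else ζ x - ζ y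
  have hinj : Function.Injective (forceMap G g₀) := by
    rw [← LinearMap.ker_eq_bot, LinearMap.ker_eq_bot']
    rintro ⟨ω, hω⟩ hs
    have hs' : ∀ x, ∑ y, ω x y • g₀ x y = 0 := fun x => congrFun hs x
    obtain ⟨hsym, hsup⟩ := mem_symW.mp hω
    have hdiag : ∀ x, ω x x = 0 := fun x => hsup x x (G.irrefl)
    -- split sums
    have split : ∀ F : V → E4, ∑ y, F y = F u + F v + ∑ y ∈ (Finset.univ.erase u).erase v, F y := by
      intro F
      rw [← Finset.add_sum_erase Finset.univ F (Finset.mem_univ u),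
        ← Finset.add_sum_erase (Finset.univ.erase u) F (a := v) (by simp [hne.symm]), add_assoc]
    have memR : ∀ y, y ∈ (Finset.univ.erase u).erase v ↔ y ≠ v ∧ y ≠ u := by simp
    let ω' : V → V → ℝ := fun a b => if a = b ∨ a = v ∨ b = v then 0 else
      if a = u then ω u b + ω v b else if b = u then ω a u + ω a v else ω a b
    have e_other : ∀ a b, a ≠ v → a ≠ u → b ≠ v → b ≠ u → ω' a b = ω a b := by
      intro a b h1 h2 h3 h4
      by_cases hab : a = b
      · subst hab; simp [ω', hdiag]
      · simp [ω', h1, h2, h3, h4, hab]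
    have e_u : ∀ b, b ≠ v → b ≠ u → ω' u b = ω u b + ω v b := by
      intro b h1 h2
      simp [ω', h1, hne, h2.symm]
    have e_u' : ∀ a, a ≠ v → a ≠ u → ω' a u = ω a u + ω a v := by
      intro b h1 h2
      simp [ω', h1, hne, h2]
    have e_v : ∀ a, ω' a v = 0 := by intro a; simp [ω']
    have e_v' : ∀ a, ω' v a = 0 := by intro a; simp [ω']
    have e_d : ∀ a, ω' a a = 0 := by intro a; simp [ω']
    have hzero : ω' = 0 := by
      apply hf' ω'
      · refine mem_symW.mpr ⟨?_, ?_⟩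
        · intro a b
          by_cases hab : a = b
          · rw [hab]
          by_cases hav : a = v
          · rw [hav, e_v, e_v']
          by_cases hbv : b = v
          · rw [hbv, e_v, e_v']
          by_cases hau : a = u
          · subst hau
            rw [e_u b hbv (Ne.symm hab), e_u' b hbv (Ne.symm hab), hsym b, hsym b]
          by_cases hbu : b = u
          · subst hbu
            rw [e_u a hav hab, e_u' a hav hab, hsym a, hsym a]
          rw [e_other a b hav hau hbv hbu, e_other b a hbv hbu hav hau, hsym]
        · intro a b hn
          by_cases hab : a = b
          · rw [hab, e_d]
          by_cases hav : a = v
          · rw [hav, e_v']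
          by_cases hbv : b = v
          · rw [hbv, e_v]
          have hn' : ¬ (G.Adj a b ∨ (a = u ∧ G.Adj v b) ∨ (b = u ∧ G.Adj a v)) :=
            fun hh => hn ⟨hab, hav, hbv, hh⟩
          push Not at hn'
          obtain ⟨n1, n2, n3⟩ := hn'
          by_cases hau : a = u
          · subst hau
            rw [e_u b hbv (Ne.symm hab), hsup _ _ n1, hsup _ _ (n2 rfl), add_zero]
          by_cases hbu : b = u
          · subst hbu
            rw [e_u' a hav hab, hsup _ _ n1, hsup _ _ (n3 rfl), add_zero]
          rw [e_other a b hav hau hbv hbu, hsup _ _ n1]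
      · intro x
        by_cases hxv : x = v
        · subst hxv; simp [e_v']
        by_cases hxu : x = u
        · subst hxu
          have a1 := hs' x
          have a2 := hs' v
          rw [split] at a1 a2 ⊢
          have : ∑ y ∈ (Finset.univ.erase x).erase v, ω' x y • (f' x - f' y) =
              ∑ y ∈ (Finset.univ.erase x).erase v, ω x y • g₀ x y +
              ∑ y ∈ (Finset.univ.erase x).erase v, ω v y • g₀ v y := by
            rw [← Finset.sum_add_distrib]
            refine Finset.sum_congr rfl fun y hy => ?_
            obtain ⟨y1, y2⟩ := (memR y).mp hy
            have b1 : g₀ x y = f' x - f' y := by simp [g₀, isE, y1, hne, fo]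
            have b2 : g₀ v y = f' x - f' y := by simp [g₀, isE, y2, y1, fv, fo]
            rw [b1, b2, e_u y y1 y2, add_smul]
          rw [this, e_v, e_d]
          have c1 : g₀ x v = - z := by simp [g₀, isE, ζv, ζo x hne]
          have c2 : g₀ v x = z := by simp [g₀, isE, ζv, ζo x hne]
          rw [c1, hdiag] at a1
          rw [c2, hdiag, hsym v x] at a2
          have := congrArg₂ (· + ·) a1 a2
          simp only [zero_smul, zero_add, add_zero, smul_neg] at this ⊢
          rw [← this]
          abel
        · have a1 := hs' x
          rw [split] at a1 ⊢
          rw [← a1, e_v, e_u' x hxv hxu]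
          have c1 : g₀ x u = f' x - f' u := by simp [g₀, isE, hxv, hxu, fo, hne]
          have c2 : g₀ x v = f' x - f' u := by simp [g₀, isE, hxu, hxv, fv, fo]
          rw [c1, c2, zero_smul, add_zero, add_smul]
          congr 1
          refine Finset.sum_congr rfl fun y hy => ?_
          obtain ⟨y1, y2⟩ := (memR y).mp hy
          rw [e_other x y hxv hxu y1 y2]
          simp [g₀, isE, hxu, hxv, fo, y1]
    have z_uv : ∀ b, b ≠ v → b ≠ u → ω u b + ω v b = 0 := by
      intro b h1 h2; rw [← e_u b h1 h2, hzero]; rfl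
    have z_o : ∀ a b, a ≠ v → a ≠ u → b ≠ v → b ≠ u → ω a b = 0 := by
      intro a b h1 h2 h3 h4; rw [← e_other a b h1 h2 h3 h4, hzero]; rfl
    have z_nc : ∀ y, y ≠ v → y ≠ u → y ∉ C → ω v y = 0 := by
      intro y h1 h2 h3
      rw [memC] at h3
      by_cases hvy : G.Adj v y
      · have huy : ¬ G.Adj u y := fun hh => h3 ⟨hh, hvy⟩
        have := z_uv y h1 h2
        rw [hsup _ _ huy, zero_add] at this
        exact this
      · exact hsup _ _ hvy
    have a2 := hs' v
    rw [split] at a2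
    have c2 : g₀ v u = z := by simp [g₀, isE, ζv, ζo u hne]
    rw [c2, hdiag, zero_smul, add_zero] at a2
    have hCsub : C ⊆ (Finset.univ.erase u).erase v := by
      intro y hy
      rw [memR]
      obtain ⟨y1, y2⟩ := (memC y).mp hy
      exact ⟨y2.ne', y1.ne'⟩
    have hstarsum : ∑ y ∈ (Finset.univ.erase u).erase v, ω v y • g₀ v y =
        starMap u C f' (fun y => ω v y) := by
      rw [starMap_apply, ← Finset.sum_subset hCsub]
      · rw [← Finset.sum_coe_sort]
        refine Finset.sum_congr rfl fun y _ => ?_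
        obtain ⟨y1, y2⟩ := (memR y.1).mp (hCsub y.2)
        simp [g₀, isE, y1, y2, fv, fo]
      · intro y hy hyC
        obtain ⟨y1, y2⟩ := (memR y).mp hy
        rw [z_nc y y1 y2 hyC, zero_smul]
    rw [hstarsum] at a2
    have hvu : ω v u = 0 := by
      by_contra hcon
      apply hz
      refine ⟨(-(ω v u)⁻¹) • (fun y : C => ω v y), ?_⟩
      rw [map_smul]
      have : starMap u C f' (fun y => ω v y) = - (ω v u • z) := by
        rw [eq_neg_iff_add_eq_zero, add_comm]; exact a2
      rw [this, smul_neg, neg_smul, neg_neg, smul_smul, inv_mul_cancel₀ hcon, one_smul]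
    rw [hvu, zero_smul, zero_add] at a2
    have hc0 : (fun y : C => ω v y) = 0 := by
      apply hstar
      rw [a2, map_zero]
    have z_v : ∀ y, ω v y = 0 := by
      intro y
      by_cases h1 : y = v
      · rw [h1, hdiag]
      by_cases h2 : y = u
      · rw [h2, hvu]
      by_cases h3 : y ∈ C
      · exact congrFun hc0 ⟨y, h3⟩
      · exact z_nc y h1 h2 h3
    have z_u : ∀ y, ω u y = 0 := by
      intro y
      by_cases h1 : y = v
      · rw [h1, hsym, hvu]
      by_cases h2 : y = u
      · rw [h2, hdiag]
      have := z_uv y h1 h2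
      rwa [z_v, add_zero] at this
    apply Subtype.ext
    funext a b
    show ω a b = 0
    by_cases h1 : a = v
    · rw [h1, z_v]
    by_cases h2 : a = u
    · rw [h2, z_u]
    by_cases h3 : b = v
    · rw [h3, hsym, z_v]
    by_cases h4 : b = u
    · rw [h4, hsym, z_u]
    exact z_o a b h1 h2 h3 h4
  obtain ⟨t, ht, hti⟩ := exists_inj_perturb (forceMap G g₁) (forceMap G g₀) hinj
  refine ⟨f + t • ζ, ?_⟩
  intro ω hω hs
  obtain ⟨hsym, hsup⟩ := mem_symW.mp hω
  have isE_symm : ∀ x y, isE x y ↔ isE y x := by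
    intro x y; simp only [isE]; tauto
  let ω₁ : V → V → ℝ := fun x y => if isE x y then t * ω x y else ω x y
  have hω₁ : ω₁ ∈ symW G := by
    refine mem_symW.mpr ⟨fun x y => ?_, fun x y hn => ?_⟩
    · simp only [ω₁, isE_symm x y, hsym x y]
    · simp [ω₁, hsup x y hn]
  have hk : (forceMap G g₀ + t • forceMap G g₁) ⟨ω₁, hω₁⟩ = 0 := by
    funext x
    rw [LinearMap.add_apply, LinearMap.smul_apply, Pi.add_apply, Pi.smul_apply,
      forceMap_apply, forceMap_apply, Finset.smul_sum, ← Finset.sum_add_distrib]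
    refine Eq.trans (Finset.sum_congr rfl fun y _ => ?_) (hs x)
    by_cases hE : isE x y
    · have hff : f x = f y := by
        rcases hE with ⟨rfl, rfl⟩ | ⟨rfl, rfl⟩
        · rw [fv, fo _ hne]
        · rw [fv, fo _ hne]
      simp only [ω₁, g₀, g₁, hE, if_true, smul_zero, add_zero, Pi.add_apply, Pi.smul_apply, hff]
      rw [add_sub_add_left_eq_sub, ← smul_sub, smul_smul, mul_comm]
    · simp only [ω₁, g₀, g₁, hE, if_false, Pi.add_apply, Pi.smul_apply]
      rw [smul_comm t, ← smul_add]
      congr 1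
      rw [smul_sub]
      abel
  have h0 : (⟨ω₁, hω₁⟩ : symW G) = 0 := by
    apply hti
    rw [hk, map_zero]
  have h0' : ω₁ = 0 := congrArg Subtype.val h0
  funext x y
  have := congrFun (congrFun h0' x) y
  by_cases hE : isE x y
  · simp only [ω₁, hE, if_true, Pi.zero_apply, mul_eq_zero, ht, false_or] at this
    simpa using this
  · simpa [ω₁, hE] using this


lemma hasMinor_mono {V W : Type*} {G H : SimpleGraph V} {K : SimpleGraph W} (hle : H ≤ G)
    (h : HasMinor H K) : HasMinor G K := by
  obtain ⟨B, h1, h2, h3, h4⟩ := h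
  refine ⟨B, h1, h2, fun i => (h3 i).mono (fun a b hab => hle hab), fun i j hij => ?_⟩
  obtain ⟨x, hx, y, hy, hxy⟩ := h4 i j hij
  exact ⟨x, hx, y, hy, hle hxy⟩

lemma hasMinor_of_contr {V : Type*} {G : SimpleGraph V} {u v : V} (huv : G.Adj u v)
    (h : HasMinor (contr G u v) (⊤ : SimpleGraph (Fin 6))) :
    HasMinor G (⊤ : SimpleGraph (Fin 6)) := by
  obtain ⟨B, h1, h2, h3, h4⟩ := h
  have hne : u ≠ v := huv.ne
  let π : V → V := fun x => if x = v then u else x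
  have πv : π v = u := by simp [π]
  have πo : ∀ x, x ≠ v → π x = x := by intro x hx; simp [π, hx]
  have hnv : ∀ i, ∃ x ∈ B i, x ≠ v := by
    intro i
    obtain ⟨j, hj⟩ : ∃ j : Fin 6, i ≠ j := ⟨i + 1, by simp⟩
    obtain ⟨x, hx, y, hy, hxy⟩ := h4 i j (by simpa using hj)
    exact ⟨x, hx, hxy.2.1⟩
  -- `v` belongs to no branch set
  have hv : ∀ i, v ∉ B i := by
    intro i hvi
    obtain ⟨x, hx, hxv⟩ := hnv i
    obtain ⟨p⟩ := (h3 i).preconnected ⟨v, hvi⟩ ⟨x, hx⟩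
    cases p with
    | nil => exact hxv rfl
    | cons hadj _ =>
      exact hadj.2.1 rfl
  have hlift : ∀ a b, (contr G u v).Adj a b → ∃ a' b', π a' = a ∧ π b' = b ∧ G.Adj a' b' := by
    rintro a b ⟨q1, q2, q3, q | ⟨rfl, q⟩ | ⟨rfl, q⟩⟩
    · exact ⟨a, b, πo a q2, πo b q3, q⟩
    · exact ⟨v, b, πv, πo b q3, q⟩
    · exact ⟨a, v, πo a q2, πv, q⟩
  refine ⟨fun i => {x | π x ∈ B i}, ?_, ?_, ?_, ?_⟩
  · intro i
    obtain ⟨x, hx, hxv⟩ := hnv i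
    exact ⟨x, by simpa [πo x hxv] using hx⟩
  · intro i j hij
    rw [Set.disjoint_left]
    intro x hx hx'
    exact Set.disjoint_left.mp (h2 i j hij) hx hx'
  · intro i
    -- fibres are connected
    have hfib : ∀ (a b : {x | π x ∈ B i}), π a = π b → (G.induce {x | π x ∈ B i}).Reachable a b := by
      rintro ⟨a, ha⟩ ⟨b, hb⟩ hab
      simp only at hab
      by_cases hav : a = v
      · by_cases hbv : b = v
        · subst hav; subst hbv; exact SimpleGraph.Reachable.refl _
        · rw [hav, πv, πo b hbv] at hab
          apply SimpleGraph.Adj.reachable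
          show G.Adj a b
          rw [hav, ← hab]; exact huv.symm
      · by_cases hbv : b = v
        · rw [hbv, πv, πo a hav] at hab
          apply SimpleGraph.Adj.reachable
          show G.Adj a b
          rw [hbv, hab]; exact huv
        · rw [πo a hav, πo b hbv] at hab
          subst hab; exact SimpleGraph.Reachable.refl _
    have hwalk : ∀ (a b : B i), ((contr G u v).induce (B i)).Reachable a b →
        ∀ a' b' : {x | π x ∈ B i}, π a' = a → π b' = b →
          (G.induce {x | π x ∈ B i}).Reachable a' b' := by
      rintro a b ⟨p⟩
      induction p with
      | nil =>
        intro a' b' ha hb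
        exact hfib a' b' (ha.trans hb.symm)
      | cons hadj p ih =>
        rename_i x y w
        intro a' b' ha hb
        obtain ⟨x', y', hx', hy', hxy⟩ := hlift x.1 y.1 hadj
        have mx : x' ∈ {x | π x ∈ B i} := by show π x' ∈ B i; rw [hx']; exact x.2
        have my : y' ∈ {x | π x ∈ B i} := by show π y' ∈ B i; rw [hy']; exact y.2
        have r1 : (G.induce {x | π x ∈ B i}).Reachable a' ⟨x', mx⟩ := hfib _ _ (ha.trans hx'.symm)
        have r2 : (G.induce {x | π x ∈ B i}).Reachable ⟨x', mx⟩ ⟨y', my⟩ :=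
          SimpleGraph.Adj.reachable hxy
        exact (r1.trans r2).trans (ih ⟨y', my⟩ b' hy' hb)
    rw [SimpleGraph.connected_iff]
    refine ⟨fun a b => hwalk ⟨π a, a.2⟩ ⟨π b, b.2⟩ ((h3 i).preconnected _ _) a b rfl rfl, ?_⟩
    obtain ⟨x, hx, hxv⟩ := hnv i
    exact ⟨⟨x, by simpa [πo x hxv] using hx⟩⟩
  · intro i j hij
    obtain ⟨x, hx, y, hy, hxy⟩ := h4 i j hij
    obtain ⟨x', y', hx', hy', hxy'⟩ := hlift x y hxy
    exact ⟨x', by show π x' ∈ B i; rw [hx']; exact hx, y', by show π y' ∈ B j; rw [hy']; exact hy, hxy'⟩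

lemma contr_edges_lt {V : Type*} [Fintype V] {G : SimpleGraph V} {u v : V} (huv : G.Adj u v) :
    (contr G u v).edgeFinset.card < G.edgeFinset.card := by
  let π : V → V := fun x => if x = v then u else x
  have πv : π v = u := by simp [π]
  have πo : ∀ x, x ≠ v → π x = x := by intro x hx; simp [π, hx]
  have hsub : (contr G u v).edgeFinset ⊆ (G.edgeFinset.erase s(u, v)).image (Sym2.map π) := by
    intro e
    induction e using Sym2.ind with
    | _ a b =>
      intro he
      rw [SimpleGraph.mem_edgeFinset, SimpleGraph.mem_edgeSet] at he
      obtain ⟨q1, q2, q3, q⟩ := he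
      have hne := huv.ne
      rw [Finset.mem_image]
      rcases q with q | ⟨rfl, q⟩ | ⟨rfl, q⟩
      · refine ⟨s(a, b), ?_, by simp [πo a q2, πo b q3]⟩
        simp only [Finset.mem_erase, SimpleGraph.mem_edgeFinset, SimpleGraph.mem_edgeSet]
        refine ⟨?_, q⟩
        simp [q2, q3]
      · refine ⟨s(v, b), ?_, by simp [πv, πo b q3]⟩
        simp only [Finset.mem_erase, SimpleGraph.mem_edgeFinset, SimpleGraph.mem_edgeSet]
        refine ⟨?_, q⟩
        simp [q1.symm, q3]
      · refine ⟨s(a, v), ?_, by simp [πv, πo a q2]⟩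
        simp only [Finset.mem_erase, SimpleGraph.mem_edgeFinset, SimpleGraph.mem_edgeSet]
        refine ⟨?_, q⟩
        simp [q1, q2]
  calc _ ≤ _ := Finset.card_le_card hsub
    _ ≤ _ := Finset.card_image_le
    _ < _ := Finset.card_erase_lt_of_mem (by simpa using huv)

/-- Two sets are joined by an edge. -/
def Touch {V : Type*} (G : SimpleGraph V) (A B : Set V) : Prop := ∃ x ∈ A, ∃ y ∈ B, G.Adj x y

/-- Six branch sets, given in order. -/
lemma hasMinor_of_six {V : Type*} {G : SimpleGraph V} (B : Fin 6 → Set V)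
    (hc : ∀ i, (G.induce (B i)).Connected)
    (h : ∀ i j, i < j → Disjoint (B i) (B j) ∧ Touch G (B i) (B j)) :
    HasMinor G (⊤ : SimpleGraph (Fin 6)) := by
  refine ⟨B, fun i => ?_, fun i j hij => ?_, hc, fun i j hij => ?_⟩
  · obtain ⟨x⟩ := (hc i).nonempty
    exact ⟨x.1, x.2⟩
  · rcases lt_or_gt_of_ne hij with hh | hh
    · exact (h i j hh).1
    · exact (h j i hh).1.symm
  · rcases lt_or_gt_of_ne hij.ne with hh | hh
    · exact (h i j hh).2
    · obtain ⟨x, hx, y, hy, hxy⟩ := (h j i hh).2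
      exact ⟨y, hy, x, hx, hxy.symm⟩

lemma conn_single {V : Type*} (G : SimpleGraph V) (x : V) : (G.induce {x}).Connected := by
  rw [SimpleGraph.connected_iff]
  refine ⟨fun a b => ?_, ⟨⟨x, rfl⟩⟩⟩
  have : a = b := Subsingleton.elim a b
  rw [this]

lemma conn_insert {V : Type*} {G : SimpleGraph V} {C : Set V} (hC : (G.induce C).Connected)
    (x y : V) (hy : y ∈ C) (hxy : G.Adj x y) : (G.induce (insert x C)).Connected := by
  have := SimpleGraph.connected_induce_union (G := G) (v := x) (w := y) (s := {x}) (t := C)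
    (conn_single G x).preconnected hC.preconnected rfl hy hxy
  rwa [← Set.insert_eq] at this

lemma conn_pair {V : Type*} {G : SimpleGraph V} (x y : V) (hxy : G.Adj x y) :
    (G.induce {x, y}).Connected := conn_insert (conn_single G y) x y rfl hxy

lemma hasMinor_of_clique {V : Type*} {G : SimpleGraph V} (s : Finset V) (hs : 6 ≤ s.card)
    (h : ∀ x ∈ s, ∀ y ∈ s, x ≠ y → G.Adj x y) : HasMinor G (⊤ : SimpleGraph (Fin 6)) := by
  obtain ⟨e⟩ := Function.Embedding.nonempty_of_card_le (α := Fin 6) (β := s) (by simpa using hs)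
  refine hasMinor_of_six (fun i => {(e i).1}) (fun i => conn_single G _) fun i j hij => ?_
  have hne : (e i).1 ≠ (e j).1 := fun hh => hij.ne (e.injective (Subtype.ext hh))
  exact ⟨by simpa using hne, _, rfl, _, rfl, h _ (e i).2 _ (e j).2 hne⟩


/-- Symmetric Boolean matrix on five points from its upper triangle. -/
def mat5 (a b c d e f g h i j : Bool) : Fin 5 → Fin 5 → Bool :=
  ![![false, a, b, c, d], ![a, false, e, f, g], ![b, e, false, h, i], ![c, f, h, false, j],
    ![d, g, i, j, false]]

/-- Symmetric Boolean matrix on four points from its upper triangle. -/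
def mat4 (a b c d e f : Bool) : Fin 4 → Fin 4 → Bool :=
  ![![false, a, b, c], ![a, false, d, e], ![b, d, false, f], ![c, e, f, false]]

/-- A triangle model with two singletons and a pair. -/
def m211 {n : ℕ} (A : Fin n → Fin n → Bool) (miss : Fin n → Bool) (s t a b : Fin n) : Bool :=
  !(miss s) && !(miss t) && A s t && A a b && (A s a || A s b) && (A t a || A t b) &&
    (a != s) && (a != t) && (b != s) && (b != t)

/-- A triangle model with a singleton and two pairs. -/
def m221 {n : ℕ} (A : Fin n → Fin n → Bool) (miss : Fin n → Bool) (s a b c d : Fin n) : Bool :=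
  !(miss s) && A a b && A c d && (A s a || A s b) && (A s c || A s d) &&
    (A a c || A a d || A b c || A b d) &&
    (a != s) && (b != s) && (c != s) && (d != s) && (a != c) && (a != d) && (b != c) && (b != d)

/-- Some model exists. -/
def hasM {n : ℕ} (A : Fin n → Fin n → Bool) (miss : Fin n → Bool) : Bool :=
  (List.finRange n).any fun s => !(miss s) && (List.finRange n).any fun a =>
    (List.finRange n).any fun b => A a b && (a != s) && (b != s) &&
      (A s a || A s b) && (List.finRange n).any fun c =>
      m211 A miss s c a b || (List.finRange n).any fun d => m221 A miss s a b c d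

lemma hasM_spec {n : ℕ} (A : Fin n → Fin n → Bool) (miss : Fin n → Bool) (h : hasM A miss = true) :
    (∃ s t a b, m211 A miss s t a b = true) ∨ (∃ s a b c d, m221 A miss s a b c d = true) := by
  simp only [hasM, List.any_eq_true, Bool.and_eq_true, Bool.or_eq_true] at h
  obtain ⟨s, _, _, a, _, b, _, _, c, _, h | ⟨d, _, h⟩⟩ := h
  · exact Or.inl ⟨_, _, _, _, h⟩
  · exact Or.inr ⟨_, _, _, _, _, h⟩

/-- Quantification over Booleans. -/
def allB (P : Bool → Bool) : Bool := P true && P false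

lemma allB_spec {P : Bool → Bool} (h : allB P = true) (b : Bool) : P b = true := by
  simp only [allB, Bool.and_eq_true] at h
  cases b
  · exact h.2
  · exact h.1

/-- At most two of four entries are false. -/
def two4 (a b c d : Bool) : Bool :=
  (a && b) || (c && d) || ((a || b) && (c || d))

/-- At most two of four entries are false, at most one if `p`. -/
def twoP (p a b c d : Bool) : Bool :=
  two4 a b c d && (!p || ((a && b && (c || d)) || ((a || b) && c && d)))

/-- Boolean check on five points. -/
def chk5 : Bool :=
  allB fun p => allB fun a => allB fun b => allB fun c => allB fun d => !(twoP p a b c d) ||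
  allB fun q => allB fun e => allB fun f => allB fun g => !(twoP q a e f g) ||
  allB fun h => allB fun i => !(two4 b e h i) ||
  allB fun j => !(two4 c f h j && two4 d g i j) ||
    hasM (mat5 a b c d e f g h i j) ![p, q, false, false, false]

/-- Boolean check on four points. -/
def chk4 : Bool :=
  allB fun a => allB fun b => allB fun c => allB fun d => allB fun e => allB fun f =>
  !((a && b || a && c || b && c) && (a && d || a && e || d && e) && (b && d || b && f || d && f) &&
    (c && e || c && f || e && f)) || hasM (mat4 a b c d e f) (fun _ => false)

lemma chk5_true : chk5 = true := by
  decide +kernel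

lemma chk4_true : chk4 = true := by
  decide +kernel

lemma or_elim_not {a b : Bool} (h : (!a || b) = true) (ha : a = true) : b = true := by
  rw [ha] at h; simpa using h

lemma chk5_spec (a b c d e f g h i j p q : Bool) (h0 : twoP p a b c d = true)
    (h1 : twoP q a e f g = true) (h2 : two4 b e h i = true) (h3 : two4 c f h j = true)
    (h4 : two4 d g i j = true) :
    hasM (mat5 a b c d e f g h i j) ![p, q, false, false, false] = true := by
  have H := chk5_true
  unfold chk5 at H
  have H := allB_spec (allB_spec (allB_spec (allB_spec (allB_spec H p) a) b) c) d
  have H := or_elim_not H h0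
  have H := allB_spec (allB_spec (allB_spec (allB_spec H q) e) f) g
  have H := or_elim_not H h1
  have H := allB_spec (allB_spec H h) i
  have H := or_elim_not H h2
  have H := allB_spec H j
  exact or_elim_not H (by rw [h3, h4]; rfl)

lemma chk4_spec (a b c d e f : Bool) (h0 : (a && b || a && c || b && c) = true)
    (h1 : (a && d || a && e || d && e) = true) (h2 : (b && d || b && f || d && f) = true)
    (h3 : (c && e || c && f || e && f) = true) :
    hasM (mat4 a b c d e f) (fun _ => false) = true := by
  have H := chk4_true
  unfold chk4 at H
  have H := allB_spec (allB_spec (allB_spec (allB_spec (allB_spec (allB_spec H a) b) c) d) e) f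
  exact or_elim_not H (by rw [h0, h1, h2, h3]; rfl)


lemma Touch.symm {V : Type*} {G : SimpleGraph V} {A B : Set V} (h : Touch G A B) :
    Touch G B A := by
  obtain ⟨x, hx, y, hy, hxy⟩ := h
  exact ⟨y, hy, x, hx, hxy.symm⟩

lemma Touch.mono_left {V : Type*} {G : SimpleGraph V} {A A' B : Set V} (hA : A ⊆ A')
    (h : Touch G A B) : Touch G A' B := by
  obtain ⟨x, hx, y, hy, hxy⟩ := h
  exact ⟨x, hA hx, y, hy, hxy⟩

/-- Assemble six branch sets around a vertex `v`. -/
lemma six_of_three {V : Type*} {G : SimpleGraph V} (v a a' : V) (C P Q R : Set V)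
    (hC : (G.induce C).Connected) (hCv : v ∉ C) (hCN : ∀ x ∈ C, ¬ G.Adj v x)
    (haa : a ≠ a') (hva : G.Adj v a) (hva' : G.Adj v a')
    (ha : ∃ z ∈ C, G.Adj a z) (ha' : ∃ z ∈ C, G.Adj a' z)
    (hP : (G.induce P).Connected) (hQ : (G.induce Q).Connected) (hR : (G.induce R).Connected)
    (sP : ∀ x ∈ P, G.Adj v x ∧ x ≠ a ∧ x ≠ a') (sQ : ∀ x ∈ Q, G.Adj v x ∧ x ≠ a ∧ x ≠ a')
    (sR : ∀ x ∈ R, G.Adj v x ∧ x ≠ a ∧ x ≠ a')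
    (dPQ : Disjoint P Q) (dPR : Disjoint P R) (dQR : Disjoint Q R)
    (tPQ : Touch G P Q) (tPR : Touch G P R) (tQR : Touch G Q R)
    (aP : Touch G {a} P) (aQ : Touch G {a} Q) (aR : Touch G {a} R)
    (bP : Touch G {a'} P) (bQ : Touch G {a'} Q) (bR : Touch G {a'} R) :
    HasMinor G (⊤ : SimpleGraph (Fin 6)) := by
  have dv : ∀ X : Set V, (∀ x ∈ X, G.Adj v x ∧ x ≠ a ∧ x ≠ a') → (G.induce X).Connected →
      Disjoint {v} X ∧ Touch G {v} X := by
    intro X hX hc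
    refine ⟨?_, ?_⟩
    · rw [Set.disjoint_singleton_left]
      exact fun h => (hX v h).1.ne rfl
    · obtain ⟨x⟩ := hc.nonempty
      exact ⟨v, rfl, x.1, x.2, (hX _ x.2).1⟩
  have dC : ∀ X : Set V, (∀ x ∈ X, G.Adj v x ∧ x ≠ a ∧ x ≠ a') → Disjoint (insert a C) X := by
    intro X hX
    rw [Set.disjoint_left]
    rintro x (rfl | hx) hx'
    · exact (hX _ hx').2.1 rfl
    · exact hCN x hx (hX _ hx').1
  have da' : ∀ X : Set V, (∀ x ∈ X, G.Adj v x ∧ x ≠ a ∧ x ≠ a') → Disjoint {a'} X := by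
    intro X hX
    rw [Set.disjoint_singleton_left]
    exact fun h => (hX _ h).2.2 rfl
  have sub : ({a} : Set V) ⊆ insert a C := by simp
  obtain ⟨z, hz, haz⟩ := ha
  obtain ⟨z', hz', haz'⟩ := ha'
  refine hasMinor_of_six ![{v}, insert a C, {a'}, P, Q, R] ?_ ?_
  · intro i
    fin_cases i
    · exact conn_single G v
    · exact conn_insert hC a z hz haz
    · exact conn_single G a'
    · exact hP
    · exact hQ
    · exact hR
  · intro i j hij
    fin_cases i <;> fin_cases j <;> first | (exact absurd hij (by decide)) | skip
    · refine ⟨?_, v, rfl, a, Set.mem_insert _ _, hva⟩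
      show Disjoint {v} (insert a C)
      rw [Set.disjoint_singleton_left]
      rintro (h | h)
      · exact hva.ne h
      · exact hCv h
    · refine ⟨?_, v, rfl, a', rfl, hva'⟩
      show Disjoint {v} {a'}
      rw [Set.disjoint_singleton_left]
      exact hva'.ne
    · exact dv P sP hP
    · exact dv Q sQ hQ
    · exact dv R sR hR
    · refine ⟨?_, z', Set.mem_insert_of_mem _ hz', a', rfl, haz'.symm⟩
      show Disjoint (insert a C) {a'}
      rw [Set.disjoint_singleton_right]
      rintro (h | h)
      · exact haa h.symm
      · exact hCN _ h hva'
    · exact ⟨dC P sP, aP.mono_left sub⟩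
    · exact ⟨dC Q sQ, aQ.mono_left sub⟩
    · exact ⟨dC R sR, aR.mono_left sub⟩
    · exact ⟨da' P sP, bP⟩
    · exact ⟨da' Q sQ, bQ⟩
    · exact ⟨da' R sR, bR⟩
    · exact ⟨dPQ, tPQ⟩
    · exact ⟨dPR, tPR⟩
    · exact ⟨dQR, tQR⟩

lemma minor_of_hasM {V : Type*} {G : SimpleGraph V} (v a a' : V) (C : Set V)
    (hC : (G.induce C).Connected) (hCv : v ∉ C) (hCN : ∀ x ∈ C, ¬ G.Adj v x)
    (haa : a ≠ a') (hva : G.Adj v a) (hva' : G.Adj v a')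
    (ha : ∃ z ∈ C, G.Adj a z) (ha' : ∃ z ∈ C, G.Adj a' z)
    {n : ℕ} (r : Fin n → V) (hr : Function.Injective r) (miss : Fin n → Bool)
    (s : ∀ i, G.Adj v (r i) ∧ r i ≠ a ∧ r i ≠ a')
    (hmiss : ∀ i, miss i = false → G.Adj a (r i) ∧ G.Adj a' (r i))
    (h1 : ∀ i j, i ≠ j → G.Adj a (r i) ∨ G.Adj a (r j))
    (h2 : ∀ i j, i ≠ j → G.Adj a' (r i) ∨ G.Adj a' (r j))
    (h : hasM (fun i j => decide (G.Adj (r i) (r j))) miss = true) :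
    HasMinor G (⊤ : SimpleGraph (Fin 6)) := by
  have single : ∀ i, miss i = false → Touch G {a} {r i} ∧ Touch G {a'} {r i} := fun i hi =>
    ⟨⟨a, rfl, _, rfl, (hmiss i hi).1⟩, ⟨a', rfl, _, rfl, (hmiss i hi).2⟩⟩
  have pair : ∀ i j, i ≠ j → Touch G {a} {r i, r j} ∧ Touch G {a'} {r i, r j} := by
    intro i j hij
    constructor
    · rcases h1 i j hij with h | h
      · exact ⟨a, rfl, r i, by simp, h⟩
      · exact ⟨a, rfl, r j, by simp, h⟩
    · rcases h2 i j hij with h | h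
      · exact ⟨a', rfl, r i, by simp, h⟩
      · exact ⟨a', rfl, r j, by simp, h⟩
  have s1 : ∀ i, ∀ x ∈ ({r i} : Set V), G.Adj v x ∧ x ≠ a ∧ x ≠ a' := by
    rintro i x rfl; exact s i
  have s2 : ∀ i j, ∀ x ∈ ({r i, r j} : Set V), G.Adj v x ∧ x ≠ a ∧ x ≠ a' := by
    rintro i j x (rfl | rfl)
    · exact s i
    · exact s j
  have t12 : ∀ i j k, G.Adj (r i) (r j) ∨ G.Adj (r i) (r k) → Touch G {r i} {r j, r k} := by
    rintro i j k (h | h)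
    · exact ⟨_, rfl, r j, by simp, h⟩
    · exact ⟨_, rfl, r k, by simp, h⟩
  rcases hasM_spec _ _ h with ⟨i, j, k, l, hm⟩ | ⟨i, j, k, l, m, hm⟩
  · simp only [m211, Bool.and_eq_true, Bool.or_eq_true, decide_eq_true_eq, bne_iff_ne, ne_eq,
      Bool.not_eq_true'] at hm
    obtain ⟨⟨⟨⟨⟨⟨⟨⟨⟨m1, m2⟩, m3⟩, m4⟩, m5⟩, m6⟩, m7⟩, m8⟩, m9⟩, m10⟩ := hm
    have hkl : k ≠ l := fun h => m4.ne (congrArg r h)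
    refine six_of_three v a a' C {r i} {r j} {r k, r l} hC hCv hCN haa hva hva' ha ha'
      (conn_single G _) (conn_single G _) (conn_pair _ _ m4) (s1 i) (s1 j) (s2 k l)
      ?_ ?_ ?_ ⟨_, rfl, _, rfl, m3⟩ (t12 _ _ _ m5) (t12 _ _ _ m6)
      (single i m1).1 (single j m2).1 (pair k l hkl).1
      (single i m1).2 (single j m2).2 (pair k l hkl).2
    · simpa using m3.ne
    · simp [hr.eq_iff, Ne.symm m7, Ne.symm m9]
    · simp [hr.eq_iff, Ne.symm m8, Ne.symm m10]
  · simp only [m221, Bool.and_eq_true, Bool.or_eq_true, decide_eq_true_eq, bne_iff_ne, ne_eq,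
      Bool.not_eq_true'] at hm
    obtain ⟨⟨⟨⟨⟨⟨⟨⟨⟨⟨⟨⟨⟨m1, m2⟩, m3⟩, m4⟩, m5⟩, m6⟩, n1⟩, n2⟩, n3⟩, n4⟩, n5⟩, n6⟩, n7⟩, n8⟩ := hm
    have hjk : j ≠ k := fun h => m2.ne (congrArg r h)
    have hlm : l ≠ m := fun h => m3.ne (congrArg r h)
    refine six_of_three v a a' C {r i} {r j, r k} {r l, r m} hC hCv hCN haa hva hva' ha ha'
      (conn_single G _) (conn_pair _ _ m2) (conn_pair _ _ m3) (s1 i) (s2 j k) (s2 l m)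
      ?_ ?_ ?_ (t12 _ _ _ m4) (t12 _ _ _ m5) ?_
      (single i m1).1 (pair j k hjk).1 (pair l m hlm).1
      (single i m1).2 (pair j k hjk).2 (pair l m hlm).2
    · simp [hr.eq_iff, Ne.symm n1, Ne.symm n2]
    · simp [hr.eq_iff, Ne.symm n3, Ne.symm n4]
    · simp [hr.eq_iff, n5, n6, n7, n8]
      tauto
    · rcases m6 with ((h | h) | h) | h
      · exact ⟨r j, by simp, r l, by simp, h⟩
      · exact ⟨r j, by simp, r m, by simp, h⟩
      · exact ⟨r k, by simp, r l, by simp, h⟩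
      · exact ⟨r k, by simp, r m, by simp, h⟩

lemma mat5_eq {V : Type*} (G : SimpleGraph V) (r : Fin 5 → V) :
    mat5 (decide (G.Adj (r 0) (r 1))) (decide (G.Adj (r 0) (r 2))) (decide (G.Adj (r 0) (r 3)))
      (decide (G.Adj (r 0) (r 4))) (decide (G.Adj (r 1) (r 2))) (decide (G.Adj (r 1) (r 3)))
      (decide (G.Adj (r 1) (r 4))) (decide (G.Adj (r 2) (r 3))) (decide (G.Adj (r 2) (r 4)))
      (decide (G.Adj (r 3) (r 4))) = fun i j => decide (G.Adj (r i) (r j)) := by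
  funext i j
  fin_cases i <;> fin_cases j <;> first | rfl | (simp [mat5]; done) | (simp [mat5]; exact G.adj_comm _ _)

lemma mat4_eq {V : Type*} (G : SimpleGraph V) (r : Fin 4 → V) :
    mat4 (decide (G.Adj (r 0) (r 1))) (decide (G.Adj (r 0) (r 2))) (decide (G.Adj (r 0) (r 3)))
      (decide (G.Adj (r 1) (r 2))) (decide (G.Adj (r 1) (r 3)))
      (decide (G.Adj (r 2) (r 3))) = fun i j => decide (G.Adj (r i) (r j)) := by
  funext i j
  fin_cases i <;> fin_cases j <;> first | rfl | (simp [mat4]; done) | (simp [mat4]; exact G.adj_comm _ _)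

lemma two4_of {a b c d : Prop} (h1 : a ∨ b ∨ c) (h2 : a ∨ b ∨ d) (h3 : a ∨ c ∨ d)
    (h4 : b ∨ c ∨ d) : two4 (decide a) (decide b) (decide c) (decide d) = true := by
  simp only [two4, Bool.and_eq_true, Bool.or_eq_true, decide_eq_true_eq]
  tauto

lemma twoP_of {p a b c d : Prop} [Decidable p] (h1 : a ∨ b ∨ c) (h2 : a ∨ b ∨ d) (h3 : a ∨ c ∨ d)
    (h4 : b ∨ c ∨ d) (hp : p → (a ∨ b) ∧ (a ∨ c) ∧ (a ∨ d) ∧ (b ∨ c) ∧ (b ∨ d) ∧ (c ∨ d)) :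
    twoP (decide p) (decide a) (decide b) (decide c) (decide d) = true := by
  have h5 := two4_of h1 h2 h3 h4
  by_cases h : p
  · obtain ⟨g1, g2, g3, g4, g5, g6⟩ := hp h
    clear hp h1 h2 h3 h4
    by_cases a <;> by_cases b <;> by_cases c <;> by_cases d <;> simp_all [twoP]
  · simp [h, twoP, h5]


lemma miss_bound {V : Type*} [Fintype V] {G : SimpleGraph V} {v : V}
    (hN : ∀ x, G.Adj v x → 4 ≤ (G.neighborFinset v ∩ G.neighborFinset x).card)
    (x : V) (hx : G.Adj v x) (T : Finset V) (hT : ∀ t ∈ T, G.Adj v t ∧ ¬ G.Adj x t) :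
    T.card + 4 ≤ G.degree v := by
  have hd : Disjoint T (G.neighborFinset v ∩ G.neighborFinset x) := by
    rw [Finset.disjoint_left]
    intro t ht ht'
    simp only [Finset.mem_inter, SimpleGraph.mem_neighborFinset] at ht'
    exact (hT t ht).2 ht'.2
  have hs : T ∪ (G.neighborFinset v ∩ G.neighborFinset x) ⊆ G.neighborFinset v := by
    intro t ht
    rcases Finset.mem_union.1 ht with h | h
    · simpa using (hT t h).1
    · exact (Finset.mem_inter.1 h).1
  have := Finset.card_le_card hs
  rw [Finset.card_union_of_disjoint hd, G.card_neighborFinset_eq_degree] at this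
  have := hN x hx
  omega

lemma two3_of {p q r : Prop} (h1 : p ∨ q) (h2 : p ∨ r) (h3 : q ∨ r) :
    (decide p && decide q || decide p && decide r || decide q && decide r) = true := by
  by_cases p <;> by_cases q <;> by_cases r <;> simp_all

lemma inj5 {V : Type*} {x y s t u : V} (h1 : x ≠ y) (h2 : x ≠ s) (h3 : x ≠ t) (h4 : x ≠ u)
    (h5 : y ≠ s) (h6 : y ≠ t) (h7 : y ≠ u) (h8 : s ≠ t) (h9 : s ≠ u) (h10 : t ≠ u) :
    Function.Injective ![x, y, s, t, u] := by
  have key : ∀ i j : Fin 5, i < j → ![x, y, s, t, u] i ≠ ![x, y, s, t, u] j := by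
    intro i j hij
    fin_cases i <;> fin_cases j <;> first | (exact absurd hij (by decide)) | assumption
  intro i j hij
  rcases lt_trichotomy i j with h | h | h
  · exact absurd hij (key _ _ h)
  · exact h
  · exact absurd hij.symm (key _ _ h)

set_option maxHeartbeats 1000000 in
lemma noTwo {V : Type*} [Fintype V] {G : SimpleGraph V} {v : V}
    (hN : ∀ x, G.Adj v x → 4 ≤ (G.neighborFinset v ∩ G.neighborFinset x).card)
    (hdeg : G.degree v ≤ 7) (a a' : V) (haa : a ≠ a') (hva : G.Adj v a) (hva' : G.Adj v a')
    (hnadj : ¬ G.Adj a a') (C : Set V)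
    (hC : (G.induce C).Connected) (hCv : v ∉ C) (hCN : ∀ x ∈ C, ¬ G.Adj v x)
    (ha : ∃ z ∈ C, G.Adj a z) (ha' : ∃ z ∈ C, G.Adj a' z) :
    HasMinor G (⊤ : SimpleGraph (Fin 6)) := by
  have hnadj' : ¬ G.Adj a' a := fun h => hnadj h.symm
  have mb := miss_bound hN
  set R := ((G.neighborFinset v).erase a).erase a' with hR
  have memR : ∀ x, x ∈ R ↔ x ≠ a' ∧ x ≠ a ∧ G.Adj v x := by intro x; simp [hR]
  have hRc : R.card + 2 = G.degree v := by
    have h1 : a ∈ G.neighborFinset v := by simpa using hva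
    have h2 : a' ∈ (G.neighborFinset v).erase a := by simpa using ⟨haa.symm, hva'⟩
    have e1 := Finset.card_erase_add_one h1
    have e2 := Finset.card_erase_add_one h2
    rw [← G.card_neighborFinset_eq_degree, hR]
    omega
  have h6 : 6 ≤ G.degree v := by
    have := mb a hva {a, a'} (by
      simp only [Finset.mem_insert, Finset.mem_singleton]
      rintro t (rfl | rfl)
      · exact ⟨hva, G.irrefl⟩
      · exact ⟨hva', hnadj⟩)
    rw [Finset.card_pair haa] at this
    omega
  -- a misses at most (deg - 6) elements
  have mb1 : ∀ x ∈ R, ¬ G.Adj a x → 7 ≤ G.degree v := by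
    intro x hx hax
    obtain ⟨x1, x2, x3⟩ := (memR x).1 hx
    have := mb a hva {a, a', x} (by
      simp only [Finset.mem_insert, Finset.mem_singleton]
      rintro t (rfl | rfl | rfl)
      · exact ⟨hva, G.irrefl⟩
      · exact ⟨hva', hnadj⟩
      · exact ⟨x3, hax⟩)
    rw [Finset.card_eq_three.2 ⟨a, a', x, haa, x2.symm, x1.symm, rfl⟩] at this
    omega
  have mb1' : ∀ x ∈ R, ¬ G.Adj a' x → 7 ≤ G.degree v := by
    intro x hx hax
    obtain ⟨x1, x2, x3⟩ := (memR x).1 hx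
    have := mb a' hva' {a, a', x} (by
      simp only [Finset.mem_insert, Finset.mem_singleton]
      rintro t (rfl | rfl | rfl)
      · exact ⟨hva, hnadj'⟩
      · exact ⟨hva', G.irrefl⟩
      · exact ⟨x3, hax⟩)
    rw [Finset.card_eq_three.2 ⟨a, a', x, haa, x2.symm, x1.symm, rfl⟩] at this
    omega
  have mb2 : ∀ x ∈ R, ∀ y ∈ R, x ≠ y → G.Adj a x ∨ G.Adj a y := by
    intro x hx y hy hxy
    by_contra! hcon
    obtain ⟨x1, x2, x3⟩ := (memR x).1 hx
    obtain ⟨y1, y2, y3⟩ := (memR y).1 hy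
    have := mb a hva {a, a', x, y} (by
      simp only [Finset.mem_insert, Finset.mem_singleton]
      rintro t (rfl | rfl | rfl | rfl)
      · exact ⟨hva, G.irrefl⟩
      · exact ⟨hva', hnadj⟩
      · exact ⟨x3, hcon.1⟩
      · exact ⟨y3, hcon.2⟩)
    have hc : ({a, a', x, y} : Finset V).card = 4 := by
      simp [haa, x2.symm, x1.symm, y1.symm, y2.symm, hxy]
    omega
  have mb2' : ∀ x ∈ R, ∀ y ∈ R, x ≠ y → G.Adj a' x ∨ G.Adj a' y := by
    intro x hx y hy hxy
    by_contra! hcon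
    obtain ⟨x1, x2, x3⟩ := (memR x).1 hx
    obtain ⟨y1, y2, y3⟩ := (memR y).1 hy
    have := mb a' hva' {a, a', x, y} (by
      simp only [Finset.mem_insert, Finset.mem_singleton]
      rintro t (rfl | rfl | rfl | rfl)
      · exact ⟨hva, hnadj'⟩
      · exact ⟨hva', G.irrefl⟩
      · exact ⟨x3, hcon.1⟩
      · exact ⟨y3, hcon.2⟩)
    have hc : ({a, a', x, y} : Finset V).card = 4 := by
      simp [haa, x2.symm, x1.symm, y1.symm, y2.symm, hxy]
    omega
  -- three vertices other than x, all missed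
  have mb3 : ∀ x ∈ R, ∀ s t u, G.Adj v s → G.Adj v t → G.Adj v u → x ≠ s → x ≠ t → x ≠ u →
      s ≠ t → s ≠ u → t ≠ u → G.Adj x s ∨ G.Adj x t ∨ G.Adj x u := by
    intro x hx s t u hs ht hu h1 h2 h3 h4 h5 h6
    by_contra! hcon
    obtain ⟨x1, x2, x3⟩ := (memR x).1 hx
    have := mb x x3 {x, s, t, u} (by
      simp only [Finset.mem_insert, Finset.mem_singleton]
      rintro t (rfl | rfl | rfl | rfl)
      · exact ⟨x3, G.irrefl⟩
      · exact ⟨hs, hcon.1⟩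
      · exact ⟨ht, hcon.2.1⟩
      · exact ⟨hu, hcon.2.2⟩)
    have hc : ({x, s, t, u} : Finset V).card = 4 := by
      simp [h1, h2, h3, h4, h5, h6]
    omega
  by_cases h7 : G.degree v = 6
  · have hR4 : R.card = 4 := by omega
    have mb4 : ∀ x ∈ R, ∀ s ∈ R, ∀ t ∈ R, x ≠ s → x ≠ t → s ≠ t → G.Adj x s ∨ G.Adj x t := by
      intro x hx s hs t ht h1 h2 h3
      by_contra! hcon
      have x3 := ((memR x).1 hx).2.2
      have := mb x x3 {x, s, t} (by
        simp only [Finset.mem_insert, Finset.mem_singleton]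
        rintro t (rfl | rfl | rfl)
        · exact ⟨x3, G.irrefl⟩
        · exact ⟨((memR _).1 hs).2.2, hcon.1⟩
        · exact ⟨((memR _).1 ht).2.2, hcon.2⟩)
      rw [Finset.card_eq_three.2 ⟨x, s, t, h1, h2, h3, rfl⟩] at this
      omega
    let e := R.equivFinOfCardEq hR4
    let r : Fin 4 → V := fun i => (e.symm i).1
    have hr : Function.Injective r := Subtype.val_injective.comp e.symm.injective
    have rR : ∀ i, r i ∈ R := fun i => (e.symm i).2
    have full : ∀ i, G.Adj a (r i) ∧ G.Adj a' (r i) := by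
      intro i
      constructor
      · by_contra h
        have := mb1 _ (rR i) h
        omega
      · by_contra h
        have := mb1' _ (rR i) h
        omega
    have q : ∀ i j k, i ≠ j → i ≠ k → j ≠ k → G.Adj (r i) (r j) ∨ G.Adj (r i) (r k) :=
      fun i j k h1 h2 h3 => mb4 _ (rR i) _ (rR j) _ (rR k) (hr.ne h1) (hr.ne h2) (hr.ne h3)
    refine minor_of_hasM v a a' C hC hCv hCN haa hva hva' ha ha' r hr (fun _ => false)
      (fun i => ⟨((memR _).1 (rR i)).2.2, ((memR _).1 (rR i)).2.1, ((memR _).1 (rR i)).1⟩)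
      (fun i _ => full i) (fun i j _ => Or.inl (full i).1) (fun i j _ => Or.inl (full i).2) ?_
    rw [← mat4_eq]
    have sy : ∀ i j, G.Adj (r i) (r j) ↔ G.Adj (r j) (r i) := fun i j => G.adj_comm _ _
    apply chk4_spec
    · exact two3_of (q 0 1 2 (by decide) (by decide) (by decide))
        (q 0 1 3 (by decide) (by decide) (by decide)) (q 0 2 3 (by decide) (by decide) (by decide))
    · rw [sy 0 1]
      exact two3_of (q 1 0 2 (by decide) (by decide) (by decide))
        (q 1 0 3 (by decide) (by decide) (by decide)) (q 1 2 3 (by decide) (by decide) (by decide))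
    · rw [sy 0 2, sy 1 2]
      exact two3_of (q 2 0 1 (by decide) (by decide) (by decide))
        (q 2 0 3 (by decide) (by decide) (by decide)) (q 2 1 3 (by decide) (by decide) (by decide))
    · rw [sy 0 3, sy 1 3, sy 2 3]
      exact two3_of (q 3 0 1 (by decide) (by decide) (by decide))
        (q 3 0 2 (by decide) (by decide) (by decide)) (q 3 1 2 (by decide) (by decide) (by decide))
  · have hR5 : R.card = 5 := by omega
    obtain ⟨x, hx, hxa⟩ : ∃ x ∈ R, ∀ y ∈ R, y ≠ x → G.Adj a y := by
      by_cases h : ∃ x ∈ R, ¬ G.Adj a x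
      · obtain ⟨x, hx, hax⟩ := h
        refine ⟨x, hx, fun y hy hyx => ?_⟩
        exact (mb2 x hx y hy hyx.symm).resolve_left hax
      · push Not at h
        obtain ⟨x, hx⟩ := Finset.card_pos.1 (by omega : 0 < R.card)
        exact ⟨x, hx, fun y hy _ => h y hy⟩
    have hRx : (R.erase x).card = 4 := by rw [Finset.card_erase_of_mem hx, hR5]
    obtain ⟨y, hy, hya⟩ : ∃ y ∈ R.erase x, ∀ z ∈ R.erase x, z ≠ y → G.Adj a' z := by
      by_cases h : ∃ y ∈ R.erase x, ¬ G.Adj a' y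
      · obtain ⟨y, hy, hay⟩ := h
        refine ⟨y, hy, fun z hz hzy => ?_⟩
        exact (mb2' y (Finset.mem_of_mem_erase hy) z (Finset.mem_of_mem_erase hz)
          hzy.symm).resolve_left hay
      · push Not at h
        obtain ⟨x, hx⟩ := Finset.card_pos.1 (by omega : 0 < (R.erase x).card)
        exact ⟨x, hx, fun y hy _ => h y hy⟩
    have hRy : ((R.erase x).erase y).card = 3 := by rw [Finset.card_erase_of_mem hy, hRx]
    obtain ⟨s, t, u, hst, hsu, htu, hE⟩ := Finset.card_eq_three.1 hRy
    have hs : s ∈ (R.erase x).erase y := by rw [hE]; simp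
    have ht : t ∈ (R.erase x).erase y := by rw [hE]; simp
    have hu : u ∈ (R.erase x).erase y := by rw [hE]; simp
    simp only [Finset.mem_erase] at hs ht hu hy
    obtain ⟨sy, sx, sR⟩ := hs
    obtain ⟨ty, tx, tR⟩ := ht
    obtain ⟨uy, ux, uR⟩ := hu
    obtain ⟨yx, yR⟩ := hy
    set r : Fin 5 → V := ![x, y, s, t, u] with hrdef
    have hr : Function.Injective r := by
      exact inj5 yx.symm sx.symm tx.symm ux.symm sy.symm ty.symm uy.symm hst hsu htu
    have rR : ∀ i, r i ∈ R := by
      intro i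
      fin_cases i
      · exact hx
      · exact yR
      · exact sR
      · exact tR
      · exact uR
    have rv : ∀ i, G.Adj v (r i) := fun i => ((memR _).1 (rR i)).2.2
    have q : ∀ i j k l, i ≠ j → i ≠ k → i ≠ l → j ≠ k → j ≠ l → k ≠ l →
        G.Adj (r i) (r j) ∨ G.Adj (r i) (r k) ∨ G.Adj (r i) (r l) :=
      fun i j k l h1 h2 h3 h4 h5 h6 => mb3 _ (rR i) _ _ _ (rv j) (rv k) (rv l) (hr.ne h1)
        (hr.ne h2) (hr.ne h3) (hr.ne h4) (hr.ne h5) (hr.ne h6)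
    have qp : ∀ i, (¬ G.Adj a (r i) ∨ ¬ G.Adj a' (r i)) → ∀ j k, i ≠ j → i ≠ k → j ≠ k →
        G.Adj (r i) (r j) ∨ G.Adj (r i) (r k) := by
      rintro i (h | h) j k h1 h2 h3
      · have := mb3 _ (rR i) _ _ a (rv j) (rv k) hva (hr.ne h1) (hr.ne h2)
          ((memR _).1 (rR i)).2.1 (hr.ne h3) ((memR _).1 (rR j)).2.1 ((memR _).1 (rR k)).2.1
        rw [G.adj_comm (r i) a] at this
        tauto
      · have := mb3 _ (rR i) _ _ a' (rv j) (rv k) hva' (hr.ne h1) (hr.ne h2)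
          ((memR _).1 (rR i)).1 (hr.ne h3) ((memR _).1 (rR j)).1 ((memR _).1 (rR k)).1
        rw [G.adj_comm (r i) a'] at this
        tauto
    have sy' : ∀ i j, G.Adj (r i) (r j) ↔ G.Adj (r j) (r i) := fun i j => G.adj_comm _ _
    refine minor_of_hasM v a a' C hC hCv hCN haa hva hva' ha ha' r hr
      ![decide (¬ G.Adj a (r 0) ∨ ¬ G.Adj a' (r 0)), decide (¬ G.Adj a (r 1) ∨ ¬ G.Adj a' (r 1)),
        false, false, false]
      (fun i => ⟨((memR _).1 (rR i)).2.2, ((memR _).1 (rR i)).2.1, ((memR _).1 (rR i)).1⟩)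
      ?_ (fun i j hij => mb2 _ (rR i) _ (rR j) (hr.ne hij))
      (fun i j hij => mb2' _ (rR i) _ (rR j) (hr.ne hij)) ?_
    · intro i hi
      have good : ∀ z ∈ R, z ≠ x → z ≠ y → G.Adj a z ∧ G.Adj a' z := fun z hz h1 h2 =>
        ⟨hxa z hz h1, hya z (Finset.mem_erase.2 ⟨h1, hz⟩) h2⟩
      fin_cases i
      · simpa [not_or] using hi
      · simpa [not_or] using hi
      · exact good s sR sx sy
      · exact good t tR tx ty
      · exact good u uR ux uy
    · clear_value r
      rw [← mat5_eq]
      apply chk5_spec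
      · refine twoP_of ?_ ?_ ?_ ?_ fun h => ⟨?_, ?_, ?_, ?_, ?_, ?_⟩
        all_goals first | (apply q <;> decide) | (apply qp _ h <;> decide)
      · rw [sy' 0 1]
        refine twoP_of ?_ ?_ ?_ ?_ fun h => ⟨?_, ?_, ?_, ?_, ?_, ?_⟩
        all_goals first | (apply q <;> decide) | (apply qp _ h <;> decide)
      · rw [sy' 0 2, sy' 1 2]
        apply two4_of <;> (apply q <;> decide)
      · rw [sy' 0 3, sy' 1 3, sy' 2 3]
        apply two4_of <;> (apply q <;> decide)
      · rw [sy' 0 4, sy' 1 4, sy' 2 4, sy' 3 4]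
        apply two4_of <;> (apply q <;> decide)

lemma kle3 {V : Type*} [Fintype V] {G : SimpleGraph V} {v : V}
    (hG : ¬ HasMinor G (⊤ : SimpleGraph (Fin 6)))
    (hN : ∀ x, G.Adj v x → 4 ≤ (G.neighborFinset v ∩ G.neighborFinset x).card)
    (hdeg : G.degree v ≤ 7) (K : Finset V) (hKN : ∀ x ∈ K, G.Adj v x)
    (hK : ∀ x ∈ K, ∀ y ∈ K, x ≠ y → G.Adj x y) : K.card ≤ 3 := by
  by_contra! hcon
  apply hG
  have mb := miss_bound hN
  obtain ⟨K', hK'K, hK'c⟩ := Finset.exists_subset_card_eq (show 4 ≤ K.card by omega)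
  replace hKN : ∀ x ∈ K', G.Adj v x := fun x hx => hKN x (hK'K hx)
  replace hK : ∀ x ∈ K', ∀ y ∈ K', x ≠ y → G.Adj x y := fun x hx y hy => hK x (hK'K hx) y (hK'K hy)
  clear hcon hK'K
  have hvK : v ∉ K' := fun h => (hKN v h).ne rfl
  set Z := G.neighborFinset v \ K' with hZ
  have memZ : ∀ z, z ∈ Z ↔ G.Adj v z ∧ z ∉ K' := by intro z; simp [hZ]
  have hZc : Z.card + 4 = G.degree v := by
    rw [hZ, ← G.card_neighborFinset_eq_degree, ← hK'c]
    apply Finset.card_sdiff_add_card_eq_card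
    intro x hx
    simpa using hKN x hx
  -- every k in K has a neighbour in Z
  have hKZ : ∀ k ∈ K', ∃ z ∈ Z, G.Adj k z := by
    intro k hk
    by_contra! h
    have hkZ : k ∉ Z := fun h => ((memZ k).1 h).2 hk
    have := mb k (hKN k hk) (insert k Z) (by
      intro t ht
      rcases Finset.mem_insert.1 ht with rfl | ht
      · exact ⟨hKN _ hk, G.irrefl⟩
      · exact ⟨((memZ t).1 ht).1, h t ht⟩)
    rw [Finset.card_insert_of_notMem hkZ] at this
    omega
  by_cases hiso : ∃ z ∈ Z, ∀ y ∈ Z, ¬ G.Adj z y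
  · obtain ⟨z, hz, hzy⟩ := hiso
    obtain ⟨hvz, hzK⟩ := (memZ z).1 hz
    have hzk : ∀ k ∈ K', G.Adj z k := by
      intro k hk
      by_contra h
      have hkZ : k ∉ Z := fun h => ((memZ k).1 h).2 hk
      have := mb z hvz (insert k Z) (by
        intro t ht
        rcases Finset.mem_insert.1 ht with rfl | ht
        · exact ⟨hKN _ hk, h⟩
        · exact ⟨((memZ t).1 ht).1, hzy t ht⟩)
      rw [Finset.card_insert_of_notMem hkZ] at this
      omega
    apply hasMinor_of_clique (insert v (insert z K'))
    · rw [Finset.card_insert_of_notMem, Finset.card_insert_of_notMem hzK, hK'c]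
      simp [hvK, hvz.ne]
    · intro x hx y hy hxy
      simp only [Finset.mem_insert] at hx hy
      rcases hx with rfl | rfl | hx <;> rcases hy with rfl | rfl | hy
      · exact absurd rfl hxy
      · exact hvz
      · exact hKN y hy
      · exact hvz.symm
      · exact absurd rfl hxy
      · exact hzk y hy
      · exact (hKN x hx).symm
      · exact (hzk x hx).symm
      · exact hK x hx y hy hxy
  · push Not at hiso
    have hZconn : (G.induce (Z : Set V)).Connected := by
      obtain ⟨k, hk⟩ := Finset.card_pos.1 (by omega : 0 < K'.card)
      obtain ⟨z, hz, -⟩ := hKZ k hk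
      obtain ⟨y, hy, hzy⟩ := hiso z hz
      have hp := conn_pair (G := G) z y hzy
      by_cases hE : ∃ t ∈ Z, t ≠ z ∧ t ≠ y
      · obtain ⟨t, ht, htz, hty⟩ := hE
        have hZe : ({t, z, y} : Finset V) = Z := by
          apply Finset.eq_of_subset_of_card_le
          · intro x hx
            simp only [Finset.mem_insert, Finset.mem_singleton] at hx
            rcases hx with rfl | rfl | rfl <;> assumption
          · rw [Finset.card_eq_three.2 ⟨t, z, y, htz, hty, hzy.ne, rfl⟩]
            omega
        obtain ⟨w, hw, htw⟩ := hiso t ht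
        rw [← hZe] at hw ⊢
        simp only [Finset.mem_insert, Finset.mem_singleton] at hw
        have hw' : w ∈ ({z, y} : Set V) := by
          rcases hw with rfl | h | h
          · exact absurd htw G.irrefl
          · simp [h]
          · simp [h]
        have := conn_insert hp t w hw' htw
        have hc : ((({t, z, y} : Finset V)) : Set V) = insert t {z, y} := by simp
        rw [hc]
        exact this
      · push Not at hE
        have hZe : (Z : Set V) = {z, y} := by
          ext x
          simp only [Finset.mem_coe, Set.mem_insert_iff, Set.mem_singleton_iff]
          constructor
          · intro hx
            by_contra! h
            exact h.2 (hE x hx h.1)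
          · rintro (rfl | rfl) <;> assumption
        rw [hZe]
        exact hp
    let e := K'.equivFinOfCardEq hK'c
    let r : Fin 4 → V := fun i => (e.symm i).1
    have hr : Function.Injective r := Subtype.val_injective.comp e.symm.injective
    have rK : ∀ i, r i ∈ K' := fun i => (e.symm i).2
    have p1 : ∀ i, Disjoint ({v} : Set V) {r i} ∧ Touch G {v} {r i} := by
      intro i
      refine ⟨?_, v, rfl, _, rfl, hKN _ (rK i)⟩
      rw [Set.disjoint_singleton_left]
      exact (hKN _ (rK i)).ne
    have p2 : ∀ i, Disjoint (Z : Set V) {r i} ∧ Touch G Z {r i} := by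
      intro i
      obtain ⟨z, hz, h⟩ := hKZ _ (rK i)
      refine ⟨?_, z, hz, _, rfl, h.symm⟩
      rw [Set.disjoint_singleton_right]
      exact fun h => ((memZ _).1 h).2 (rK i)
    have p3 : ∀ i j, i ≠ j → Disjoint ({r i} : Set V) {r j} ∧ Touch G {r i} {r j} := by
      intro i j hij
      refine ⟨?_, _, rfl, _, rfl, hK _ (rK i) _ (rK j) (hr.ne hij)⟩
      rw [Set.disjoint_singleton_left]
      exact hr.ne hij
    have p4 : Disjoint ({v} : Set V) Z ∧ Touch G {v} Z := by
      constructor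
      · rw [Set.disjoint_singleton_left]
        exact fun h => ((memZ _).1 h).1.ne rfl
      · obtain ⟨z, hz, -⟩ := hKZ _ (rK 0)
        exact ⟨v, rfl, z, hz, ((memZ z).1 hz).1⟩
    refine hasMinor_of_six ![{v}, Z, {r 0}, {r 1}, {r 2}, {r 3}] ?_ ?_
    · intro i
      fin_cases i
      · exact conn_single G _
      · exact hZconn
      · exact conn_single G _
      · exact conn_single G _
      · exact conn_single G _
      · exact conn_single G _
    · intro i j hij
      fin_cases i <;> fin_cases j <;> first
        | (exact absurd hij (by decide)) | exact p1 _ | exact p2 _ | exact p4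
        | exact p3 _ _ (by decide)


/-- The component of `y` in `G` after deleting `X`. -/
def Cmp {V : Type*} (G : SimpleGraph V) (X : Set V) (y : V) : Set V :=
  {z | Relation.ReflTransGen (fun a b => G.Adj a b ∧ b ∉ X) y z}

lemma Cmp_self {V : Type*} (G : SimpleGraph V) (X : Set V) (y : V) : y ∈ Cmp G X y :=
  Relation.ReflTransGen.refl

lemma Cmp_step {V : Type*} {G : SimpleGraph V} {X : Set V} {y a b : V} (ha : a ∈ Cmp G X y)
    (hab : G.Adj a b) (hb : b ∉ X) : b ∈ Cmp G X y :=
  Relation.ReflTransGen.tail ha ⟨hab, hb⟩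

lemma Cmp_sub {V : Type*} {G : SimpleGraph V} {X : Set V} {y : V} (T : Set V) (hy : y ∈ T)
    (hT : ∀ a ∈ T, ∀ b, G.Adj a b → b ∉ X → b ∈ T) : Cmp G X y ⊆ T := by
  intro z hz
  change Relation.ReflTransGen _ y z at hz
  induction hz with
  | refl => exact hy
  | tail _ h ih => exact hT _ ih _ h.1 h.2

lemma Cmp_notMem {V : Type*} {G : SimpleGraph V} {X : Set V} {y : V} (hy : y ∉ X) :
    ∀ z ∈ Cmp G X y, z ∉ X :=
  Cmp_sub {z | z ∉ X} hy (fun _ _ _ _ h => h)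

lemma Cmp_conn {V : Type*} (G : SimpleGraph V) (X : Set V) (y : V) :
    (G.induce (Cmp G X y)).Connected := by
  rw [SimpleGraph.connected_iff_exists_forall_reachable]
  refine ⟨⟨y, Cmp_self G X y⟩, ?_⟩
  rintro ⟨z, hz⟩
  have hz' := hz
  change Relation.ReflTransGen _ y z at hz'
  induction hz' with
  | refl => exact SimpleGraph.Reachable.refl _
  | @tail b c hb h ih =>
    have h1 := ih hb
    refine h1.trans (SimpleGraph.Adj.reachable ?_)
    exact h.1

/-- Configuration used in the descent. -/
structure Conf {V : Type*} [Fintype V] (G : SimpleGraph V) (v : V) (C : Finset V) : Prop where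
  ne : C.Nonempty
  vdeg : 0 < G.degree v
  vC : v ∉ C
  dis : ∀ z ∈ C, ¬ G.Adj v z
  cl : ∀ z ∈ C, ∀ w, G.Adj z w → w ∈ C ∨ G.Adj v w
  pos : ∀ z ∈ C, 0 < G.degree z
  clq : ∀ z ∈ C, ∀ z' ∈ C, ∀ w w', G.Adj z w → G.Adj z' w' → w ∉ C → w' ∉ C → w ≠ w' → G.Adj w w'
  small : ((Finset.univ.filter fun w => w ∉ C ∧ ∃ z ∈ C, G.Adj z w)).card ≤ 3

lemma conf_mk {V : Type*} [Fintype V] {G : SimpleGraph V}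
    (hG : ¬ HasMinor G (⊤ : SimpleGraph (Fin 6)))
    (hN : ∀ u v, G.Adj u v → 4 ≤ (G.neighborFinset u ∩ G.neighborFinset v).card)
    (v : V) (hdeg : G.degree v ≤ 7) (hpos : 0 < G.degree v) (y : V) (hyv : y ≠ v)
    (hy : ¬ G.Adj v y) (hypos : 0 < G.degree y) (C : Finset V)
    (hC : (C : Set V) = Cmp G {x | x = v ∨ G.Adj v x} y) : Conf G v C := by
  have mem : ∀ z, z ∈ C ↔ z ∈ Cmp G {x | x = v ∨ G.Adj v x} y := by
    intro z; rw [← hC]; simp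
  have hyX : y ∉ {x | x = v ∨ G.Adj v x} := by simp [hyv, hy]
  have hnot : ∀ z ∈ C, z ≠ v ∧ ¬ G.Adj v z := by
    intro z hz
    have := Cmp_notMem hyX z ((mem z).1 hz)
    simpa [not_or] using this
  have cl : ∀ z ∈ C, ∀ w, G.Adj z w → w ∈ C ∨ G.Adj v w := by
    intro z hz w hzw
    by_cases hw : w ∈ {x | x = v ∨ G.Adj v x}
    · rcases hw with rfl | hw
      · exact absurd hzw.symm (hnot z hz).2
      · exact Or.inr hw
    · exact Or.inl ((mem w).2 (Cmp_step ((mem z).1 hz) hzw hw))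
  have clq : ∀ z ∈ C, ∀ z' ∈ C, ∀ w w', G.Adj z w → G.Adj z' w' → w ∉ C → w' ∉ C → w ≠ w' →
      G.Adj w w' := by
    intro z hz z' hz' w w' h h' hw hw' hne
    by_contra hcon
    apply hG
    have e1 := (cl z hz w h).resolve_left hw
    have e2 := (cl z' hz' w' h').resolve_left hw'
    refine noTwo (fun x hx => hN v x hx) hdeg w w' hne e1 e2 hcon (C : Set V) ?_ ?_ ?_
      ⟨z, hz, h.symm⟩ ⟨z', hz', h'.symm⟩
    · rw [hC]; exact Cmp_conn _ _ _
    · intro h; exact (hnot v h).1 rfl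
    · intro x hx; exact (hnot x hx).2
  refine ⟨⟨y, (mem y).2 (Cmp_self _ _ _)⟩, hpos, fun h => (hnot v h).1 rfl,
    fun z hz => (hnot z hz).2, cl, ?_, clq, ?_⟩
  · have : Cmp G {x | x = v ∨ G.Adj v x} y ⊆ {z | 0 < G.degree z} := by
      apply Cmp_sub {z | 0 < G.degree z} hypos
      intro a _ b hab _
      exact (G.degree_pos_iff_exists_adj b).2 ⟨a, hab.symm⟩
    intro z hz
    exact this ((mem z).1 hz)
  · apply kle3 hG (fun x hx => hN v x hx) hdeg
    · intro x hx
      simp only [Finset.mem_filter, Finset.mem_univ, true_and] at hx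
      obtain ⟨hxC, z, hz, hzx⟩ := hx
      exact (cl z hz x hzx).resolve_left hxC
    · intro x hx x' hx' hne
      simp only [Finset.mem_filter, Finset.mem_univ, true_and] at hx hx'
      obtain ⟨hxC, z, hz, hzx⟩ := hx
      obtain ⟨hxC', z', hz', hzx'⟩ := hx'
      exact clq z hz z' hz' x x' hzx hzx' hxC hxC' hne

lemma exists_nonadj {V : Type*} [Fintype V] {G : SimpleGraph V}
    (hG : ¬ HasMinor G (⊤ : SimpleGraph (Fin 6)))
    (hN : ∀ u v, G.Adj u v → 4 ≤ (G.neighborFinset u ∩ G.neighborFinset v).card)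
    (v : V) (hpos : 0 < G.degree v) :
    ∃ a a', a ≠ a' ∧ G.Adj v a ∧ G.Adj v a' ∧ ¬ G.Adj a a' := by
  by_contra! hcon
  apply hG
  obtain ⟨w, hw⟩ := (G.degree_pos_iff_exists_adj v).1 hpos
  have h4 := hN v w hw
  have hvN : v ∉ G.neighborFinset v := by simp
  have h5 : 5 ≤ (G.neighborFinset v).card := by
    have hsub : insert w (G.neighborFinset v ∩ G.neighborFinset w) ⊆ G.neighborFinset v := by
      intro x hx
      rcases Finset.mem_insert.1 hx with rfl | hx
      · simpa using hw
      · exact (Finset.mem_inter.1 hx).1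
    have := Finset.card_le_card hsub
    rw [Finset.card_insert_of_notMem (by simp)] at this
    omega
  apply hasMinor_of_clique (insert v (G.neighborFinset v))
  · rw [Finset.card_insert_of_notMem hvN]
    omega
  · intro x hx y hy hxy
    simp only [Finset.mem_insert, SimpleGraph.mem_neighborFinset] at hx hy
    rcases hx with rfl | hx <;> rcases hy with rfl | hy
    · exact absurd rfl hxy
    · exact hy
    · exact hx.symm
    · exact hcon x y hxy hx hy

/-- A vertex of degree at least `deg v` missing a neighbour of `v` has a neighbour far from `v`. -/
lemma exists_far {V : Type*} [Fintype V] {G : SimpleGraph V} (v a a' : V) (hne : a ≠ a')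
    (hva : G.Adj v a) (hva' : G.Adj v a') (hn : ¬ G.Adj a a') (hd : G.degree v ≤ G.degree a') :
    ∃ y, G.Adj a' y ∧ y ≠ v ∧ ¬ G.Adj v y := by
  by_contra! hcon
  have hsub : G.neighborFinset a' ⊆ insert v (((G.neighborFinset v).erase a).erase a') := by
    intro y hy
    rw [SimpleGraph.mem_neighborFinset] at hy
    by_cases hyv : y = v
    · simp [hyv]
    · have := hcon y hy hyv
      simp only [Finset.mem_insert, Finset.mem_erase, SimpleGraph.mem_neighborFinset]
      refine Or.inr ⟨hy.ne.symm, ?_, this⟩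
      rintro rfl
      exact hn hy.symm
  have h1 : a ∈ G.neighborFinset v := by simpa using hva
  have h2 : a' ∈ (G.neighborFinset v).erase a := by simpa using ⟨hne.symm, hva'⟩
  have e1 := Finset.card_erase_add_one h1
  have e2 := Finset.card_erase_add_one h2
  have e3 := Finset.card_le_card hsub
  have e4 := Finset.card_insert_le v (((G.neighborFinset v).erase a).erase a')
  rw [G.card_neighborFinset_eq_degree] at e1 e3
  omega

lemma conf_step {V : Type*} [Fintype V] {G : SimpleGraph V}
    (hG : ¬ HasMinor G (⊤ : SimpleGraph (Fin 6)))
    (hN : ∀ u v, G.Adj u v → 4 ≤ (G.neighborFinset u ∩ G.neighborFinset v).card)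
    (hcount : ∀ S : Finset V, S.Nonempty → (∃ x y, G.Adj x y ∧ x ∉ S) →
      ∑ x ∈ S, (G.neighborFinset x ∩ S).card + 8 ≤ 8 * S.card)
    (v : V) (C : Finset V) (h : Conf G v C) :
    ∃ v' C', Conf G v' C' ∧ C'.card < C.card := by
  set K := Finset.univ.filter fun w => w ∉ C ∧ ∃ z ∈ C, G.Adj z w with hK
  have memK : ∀ w, w ∈ K ↔ w ∉ C ∧ ∃ z ∈ C, G.Adj z w := by intro w; simp [hK]
  have hKv : ∀ w ∈ K, G.Adj v w := by
    intro w hw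
    obtain ⟨h1, z, hz, hzw⟩ := (memK w).1 hw
    exact (h.cl z hz w hzw).resolve_left h1
  have hKclq : ∀ w ∈ K, ∀ w' ∈ K, w ≠ w' → G.Adj w w' := by
    intro w hw w' hw' hne
    obtain ⟨h1, z, hz, hzw⟩ := (memK w).1 hw
    obtain ⟨h1', z', hz', hzw'⟩ := (memK w').1 hw'
    exact h.clq z hz z' hz' w w' hzw hzw' h1 h1' hne
  have hdisj : Disjoint C K := by
    rw [Finset.disjoint_right]
    intro w hw
    exact ((memK w).1 hw).1
  set S := C ∪ K with hS
  have hCS : ∀ z ∈ C, G.neighborFinset z ⊆ S := by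
    intro z hz w hw
    rw [SimpleGraph.mem_neighborFinset] at hw
    rw [hS, Finset.mem_union, memK]
    by_cases hwC : w ∈ C
    · exact Or.inl hwC
    · exact Or.inr ⟨hwC, z, hz, hw⟩
  have hvS : v ∉ S := by
    rw [hS, Finset.mem_union, not_or]
    exact ⟨h.vC, fun hh => (hKv v hh).ne rfl⟩
  have hScard : S.card = C.card + K.card := Finset.card_union_of_disjoint hdisj
  have hk3 : K.card ≤ 3 := h.small
  obtain ⟨v', hv'C, hv'min⟩ := Finset.exists_min_image C (fun z => G.degree z) h.ne
  have hdeg7 : G.degree v' ≤ 7 := by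
    by_contra! h8
    have hxK : ∀ x ∈ K, K.card + 3 ≤ (G.neighborFinset x ∩ S).card := by
      intro x hx
      obtain ⟨hxC, y, hy, hyx⟩ := (memK x).1 hx
      -- common neighbours lie in S
      have hbig : ∀ y ∈ C, G.Adj y x →
          insert y (G.neighborFinset y ∩ G.neighborFinset x) ⊆ G.neighborFinset x ∩ S ∧
          5 ≤ (insert y (G.neighborFinset y ∩ G.neighborFinset x)).card := by
        intro y hy hyx
        constructor
        · intro w hw
          rcases Finset.mem_insert.1 hw with rfl | hw
          · rw [Finset.mem_inter, SimpleGraph.mem_neighborFinset]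
            exact ⟨hyx.symm, by rw [hS]; exact Finset.mem_union_left _ hy⟩
          · rw [Finset.mem_inter] at hw ⊢
            exact ⟨hw.2, hCS y hy hw.1⟩
        · rw [Finset.card_insert_of_notMem (by simp)]
          have := hN y x hyx
          omega
      have h5 : 5 ≤ (G.neighborFinset x ∩ S).card :=
        (hbig y hy hyx).2.trans (Finset.card_le_card (hbig y hy hyx).1)
      by_contra! hlt
      have hc5 : (G.neighborFinset x ∩ S).card = 5 := by omega
      apply hG
      apply hasMinor_of_clique (insert x (G.neighborFinset x ∩ S))
      · rw [Finset.card_insert_of_notMem (by simp), hc5]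
      · -- vertices of C in it are adjacent to everything else
        have hCadj : ∀ z ∈ C, G.Adj x z → ∀ w ∈ G.neighborFinset x ∩ S, z ≠ w → G.Adj z w := by
          intro z hz hxz w hw hne
          have e := hbig z hz hxz.symm
          have heq := Finset.eq_of_subset_of_card_le e.1 (by omega)
          rw [← heq] at hw
          rcases Finset.mem_insert.1 hw with rfl | hw
          · exact absurd rfl hne
          · simpa using (Finset.mem_inter.1 hw).1
        have hmm : ∀ p ∈ G.neighborFinset x ∩ S, ∀ q ∈ G.neighborFinset x ∩ S, p ≠ q →
            G.Adj p q := by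
          intro p hp q hq hpq
          have hp' := hp
          have hq' := hq
          simp only [hS, Finset.mem_inter, SimpleGraph.mem_neighborFinset, Finset.mem_union]
            at hp' hq'
          rcases hp'.2 with hpC | hpK
          · exact hCadj p hpC hp'.1 q hq hpq
          · rcases hq'.2 with hqC | hqK
            · exact (hCadj q hqC hq'.1 p hp hpq.symm).symm
            · exact hKclq p hpK q hqK hpq
        intro p hp q hq hpq
        rcases Finset.mem_insert.1 hp with rfl | hp <;> rcases Finset.mem_insert.1 hq with rfl | hq
        · exact absurd rfl hpq
        · simpa using (Finset.mem_inter.1 hq).1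
        · exact ((G.mem_neighborFinset _ _).1 (Finset.mem_inter.1 hp).1).symm
        · exact hmm p hp q hq hpq
    have hc := hcount S (h.ne.mono Finset.subset_union_left) (by
      obtain ⟨w, hw⟩ := (G.degree_pos_iff_exists_adj v).1 h.vdeg
      exact ⟨v, w, hw, hvS⟩)
    rw [hS, Finset.sum_union hdisj, ← hS, hScard] at hc
    have s1 : C.card * 8 ≤ ∑ x ∈ C, (G.neighborFinset x ∩ S).card := by
      rw [← smul_eq_mul]
      apply Finset.card_nsmul_le_sum
      intro x hx
      rw [Finset.inter_eq_left.2 (hCS x hx), G.card_neighborFinset_eq_degree]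
      exact le_trans h8 (hv'min x hx)
    have s2 : K.card * (K.card + 3) ≤ ∑ x ∈ K, (G.neighborFinset x ∩ S).card := by
      rw [← smul_eq_mul]
      exact Finset.card_nsmul_le_sum _ _ _ hxK
    have s3 : 8 * K.card < K.card * (K.card + 3) + 8 := by
      generalize K.card = k at hk3
      interval_cases k <;> norm_num
    omega
  have hpos' := h.pos v' hv'C
  have hvv' : v ≠ v' := fun e => h.vC (e ▸ hv'C)
  have hnvv' : ¬ G.Adj v' v := fun e => h.dis v' hv'C e.symm
  set X : Set V := {x | x = v' ∨ G.Adj v' x} with hX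
  have hvX : v ∉ X := by simp [hX, hvv', hnvv']
  obtain ⟨a, a', hne, ⟨hva, hva', hn⟩, ht⟩ : ∃ a a', a ≠ a' ∧ (G.Adj v' a ∧ G.Adj v' a' ∧ ¬ G.Adj a a') ∧
      ¬ ∃ z ∈ Cmp G X v, G.Adj a' z := by
    obtain ⟨a, a', hne, hva, hva', hn⟩ := exists_nonadj hG hN v' hpos'
    by_cases ht' : ∃ z ∈ Cmp G X v, G.Adj a' z
    · by_cases ht : ∃ z ∈ Cmp G X v, G.Adj a z
      · exfalso
        apply hG
        have hnot := Cmp_notMem (G := G) hvX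
        refine noTwo (fun x hx => hN v' x hx) hdeg7 a a' hne hva hva' hn _ (Cmp_conn G X v) ?_ ?_
          ht ht'
        · intro hh; exact hnot v' hh (Or.inl rfl)
        · intro x hx hh; exact hnot x hx (Or.inr hh)
      · exact ⟨a', a, hne.symm, ⟨hva', hva, fun e => hn e.symm⟩, ht⟩
    · exact ⟨a, a', hne, ⟨hva, hva', hn⟩, ht'⟩
  have hmemC : ∀ z ∈ C, ∀ w, G.Adj z w → ¬ G.Adj v w → w ∈ C := by
    intro z hz w hzw hvw
    exact (h.cl z hz w hzw).resolve_right hvw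
  have ha'C : a' ∈ C := by
    apply hmemC v' hv'C a' hva'
    intro e
    exact ht ⟨v, Cmp_self G X v, e.symm⟩
  obtain ⟨y, hya, hyv', hvy⟩ := exists_far v' a a' hne hva hva' hn (hv'min a' ha'C)
  have hyX : y ∉ X := by simp [hX, hyv', hvy]
  have hyCv : y ∉ Cmp G X v := fun e => ht ⟨y, e, hya⟩
  have hyC : y ∈ C := by
    apply hmemC a' ha'C y hya
    intro e
    exact hyCv (Cmp_step (Cmp_self G X v) e hyX)
  have hsub : Cmp G X y ⊆ {z | z ∈ C ∧ z ∉ Cmp G X v ∧ z ∉ X} := by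
    apply Cmp_sub {z | z ∈ C ∧ z ∉ Cmp G X v ∧ z ∉ X} ⟨hyC, hyCv, hyX⟩
    rintro z ⟨hz, hzv, hzX⟩ w hzw hwX
    have hwv : w ∉ Cmp G X v := fun e => hzv (Cmp_step e hzw.symm hzX)
    refine ⟨?_, hwv, hwX⟩
    apply hmemC z hz w hzw
    intro e
    exact hwv (Cmp_step (Cmp_self G X v) e hwX)
  refine ⟨v', (Cmp G X y).toFinset, ?_, ?_⟩
  · exact conf_mk hG hN v' hdeg7 hpos' y hyv' hvy (h.pos y hyC) _ (by simp [hX])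
  · apply Finset.card_lt_card
    rw [Finset.ssubset_iff_of_subset]
    · refine ⟨v', hv'C, ?_⟩
      rw [Set.mem_toFinset]
      intro e
      exact (hsub e).2.2 (Or.inl rfl)
    · intro z hz
      rw [Set.mem_toFinset] at hz
      exact (hsub hz).1

lemma conf_false {V : Type*} [Fintype V] {G : SimpleGraph V}
    (hG : ¬ HasMinor G (⊤ : SimpleGraph (Fin 6)))
    (hN : ∀ u v, G.Adj u v → 4 ≤ (G.neighborFinset u ∩ G.neighborFinset v).card)
    (hcount : ∀ S : Finset V, S.Nonempty → (∃ x y, G.Adj x y ∧ x ∉ S) →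
      ∑ x ∈ S, (G.neighborFinset x ∩ S).card + 8 ≤ 8 * S.card) :
    ∀ (n : ℕ) (v : V) (C : Finset V), Conf G v C → C.card = n → False := by
  intro n
  induction n using Nat.strong_induction_on with
  | _ n ih =>
    intro v C h hc
    obtain ⟨v', C', h', hlt⟩ := conf_step hG hN hcount v C h
    exact ih C'.card (hc ▸ hlt) v' C' h' rfl

lemma comb_false {V : Type*} [Fintype V] {G : SimpleGraph V}
    (hG : ¬ HasMinor G (⊤ : SimpleGraph (Fin 6)))
    (hN : ∀ u v, G.Adj u v → 4 ≤ (G.neighborFinset u ∩ G.neighborFinset v).card)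
    (u0 v0 : V) (h0 : G.Adj u0 v0)
    (hcount1 : ∀ S : Finset V, S.Nonempty → (∀ x y, G.Adj x y → x ∈ S) →
      ∑ x ∈ S, G.degree x + 6 ≤ 8 * S.card)
    (hcount : ∀ S : Finset V, S.Nonempty → (∃ x y, G.Adj x y ∧ x ∉ S) →
      ∑ x ∈ S, (G.neighborFinset x ∩ S).card + 8 ≤ 8 * S.card) : False := by
  set S := Finset.univ.filter fun x => 0 < G.degree x with hS
  have memS : ∀ x y, G.Adj x y → x ∈ S := by
    intro x y hxy
    simp only [hS, Finset.mem_filter, Finset.mem_univ, true_and]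
    exact (G.degree_pos_iff_exists_adj x).2 ⟨y, hxy⟩
  have hne : S.Nonempty := ⟨u0, memS _ _ h0⟩
  have hc := hcount1 S hne memS
  obtain ⟨v, hvS, hmin⟩ := Finset.exists_min_image S (fun z => G.degree z) hne
  have hpos : 0 < G.degree v := by simpa [hS] using hvS
  have hdeg : G.degree v ≤ 7 := by
    by_contra! h8
    have : S.card * 8 ≤ ∑ x ∈ S, G.degree x := by
      rw [← smul_eq_mul]
      exact Finset.card_nsmul_le_sum _ _ _ fun x hx => le_trans h8 (hmin x hx)
    omega
  obtain ⟨a, a', haa, hva, hva', hn⟩ := exists_nonadj hG hN v hpos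
  obtain ⟨y, hya, hyv, hvy⟩ := exists_far v a a' haa hva hva' hn (hmin a' (memS _ _ hva'.symm))
  exact conf_false hG hN hcount _ v (Cmp G {x | x = v ∨ G.Adj v x} y).toFinset
    (conf_mk hG hN v hdeg hpos y hyv hvy
      ((G.degree_pos_iff_exists_adj y).2 ⟨a', hya.symm⟩) _ (by simp)) rfl


lemma exists_sf {V : Type*} [Fintype V] : ∀ (n : ℕ) (G : SimpleGraph V),
    G.edgeFinset.card = n → ¬ HasMinor G (⊤ : SimpleGraph (Fin 6)) → ∃ f, SF G f := by
  intro n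
  induction n using Nat.strong_induction_on with
  | _ n ih =>
    intro G hn hG
    have good : ∀ H : SimpleGraph V, H < G → ∃ f, SF H f := by
      intro H hlt
      refine ih H.edgeFinset.card ?_ H rfl (fun h => hG (hasMinor_mono hlt.le h))
      rw [← hn]
      exact Finset.card_lt_card (SimpleGraph.edgeFinset_ssubset_edgeFinset.2 hlt)
    by_contra hbad
    have hN : ∀ u v, G.Adj u v → 4 ≤ (G.neighborFinset u ∩ G.neighborFinset v).card := by
      intro u v huv
      by_contra! hlt
      apply hbad
      refine sf_of_contr G u v huv (by omega) ?_
      refine ih (contr G u v).edgeFinset.card ?_ _ rfl (fun h => hG (hasMinor_of_contr huv h))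
      rw [← hn]
      exact contr_edges_lt huv
    obtain ⟨u0, v0, h0⟩ : ∃ u v, G.Adj u v := by
      by_contra! hno
      apply hbad
      refine ⟨0, fun w hw _ => ?_⟩
      funext x y
      exact (mem_symW.mp hw).2 x y (hno x y)
    refine comb_false hG hN u0 v0 h0 ?_ ?_
    · intro S hS hsupp
      obtain ⟨H, hHadj⟩ : ∃ H : SimpleGraph V,
          ∀ x y, H.Adj x y ↔ G.Adj x y ∧ s(x, y) ≠ s(u0, v0) :=
        ⟨G.deleteEdges {s(u0, v0)}, by intro x y; simp [SimpleGraph.deleteEdges_adj]⟩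
      have hlt : H < G := by
        refine lt_of_le_of_ne (fun x y h => ((hHadj x y).1 h).1) ?_
        intro e
        have : H.Adj u0 v0 := e ▸ h0
        exact ((hHadj _ _).1 this).2 rfl
      obtain ⟨f, hf⟩ := good H hlt
      have hc := sf_count hf S hS (fun x y h => hsupp x y ((hHadj x y).1 h).1)
      have hd : ∀ x, G.degree x ≤
          H.degree x + (if x = u0 then 1 else 0) + (if x = v0 then 1 else 0) := by
        intro x
        have hsub : G.neighborFinset x ⊆ H.neighborFinset x ∪ (if x = u0 then {v0} else ∅) ∪
            (if x = v0 then {u0} else ∅) := by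
          intro y hy
          rw [SimpleGraph.mem_neighborFinset] at hy
          rw [Finset.mem_union, Finset.mem_union, SimpleGraph.mem_neighborFinset, hHadj]
          by_cases he : s(x, y) = s(u0, v0)
          · rcases Sym2.eq_iff.1 he with ⟨rfl, rfl⟩ | ⟨rfl, rfl⟩
            · simp
            · simp
          · exact Or.inl (Or.inl ⟨hy, he⟩)
        rw [← G.card_neighborFinset_eq_degree, ← H.card_neighborFinset_eq_degree]
        refine (Finset.card_le_card hsub).trans ((Finset.card_union_le _ _).trans ?_)
        refine add_le_add ((Finset.card_union_le _ _).trans (add_le_add le_rfl ?_)) ?_ <;>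
          split_ifs <;> simp
      have hs := Finset.sum_le_sum (fun x (_ : x ∈ S) => hd x)
      rw [Finset.sum_add_distrib, Finset.sum_add_distrib, Finset.sum_ite_eq',
        Finset.sum_ite_eq'] at hs
      have e1 : (if u0 ∈ S then 1 else 0) ≤ 1 := by split_ifs <;> simp
      have e2 : (if v0 ∈ S then 1 else 0) ≤ 1 := by split_ifs <;> simp
      omega
    · intro S hS ⟨x0, y0, hxy0, hx0⟩
      obtain ⟨H, hHadj⟩ : ∃ H : SimpleGraph V, ∀ x y, H.Adj x y ↔ G.Adj x y ∧ x ∈ S ∧ y ∈ S :=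
        ⟨{ Adj := fun x y => G.Adj x y ∧ x ∈ S ∧ y ∈ S
           symm := ⟨fun x y h => ⟨h.1.symm, h.2.2, h.2.1⟩⟩
           loopless := ⟨fun x h => h.1.ne rfl⟩ }, fun _ _ => Iff.rfl⟩
      have hlt : H < G := by
        refine lt_of_le_of_ne (fun x y h => ((hHadj x y).1 h).1) ?_
        intro e
        have : H.Adj x0 y0 := e ▸ hxy0
        exact hx0 ((hHadj _ _).1 this).2.1
      obtain ⟨f, hf⟩ := good H hlt
      have hc := sf_count hf S hS (fun x y h => ((hHadj x y).1 h).2.1)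
      have : ∑ x ∈ S, (G.neighborFinset x ∩ S).card = ∑ x ∈ S, H.degree x := by
        apply Finset.sum_congr rfl
        intro x hx
        rw [← H.card_neighborFinset_eq_degree]
        congr 1
        ext y
        simp only [Finset.mem_inter, SimpleGraph.mem_neighborFinset, hHadj]
        exact ⟨fun h => ⟨h.1, hx, h.2⟩, fun h => ⟨h.1, h.2.2⟩⟩
      omega

/-- Every finite simple graph with no `K₆` minor (in particular, every linklessly
embeddable graph) is generically `4`-stress free. -/
theorem k6MinorFree_genericallyFourStressFree {V : Type*} [Fintype V] (G : SimpleGraph V)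
    (hfree : ¬ HasMinor G (⊤ : SimpleGraph (Fin 6))) :
    GenericallyStressFree G 4 := by
  exact generically_of_exists G (exists_sf _ G rfl hfree)
end

section
/- Let r be an integer with 3 ≤ r ≤ 5 and let G be a finite simple graph that has at least one edge and in which every edge belongs to at least r−2 triangles (i.e., the two endpoints of every edge have at least r−2 common neighbors). Then G has a K_r minor. -/
open scoped Classical

namespace KrAux

variable {V : Type*}

/-- `l` is a (list of the vertices of a) path of `G` inside `S`. -/
def PathIn (G : SimpleGraph V) (S : Set V) (l : List V) : Prop :=
  l.IsChain G.Adj ∧ l.Nodup ∧ ∀ x ∈ l, x ∈ S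

/-- `l` is a longest path of `G` inside `S`. -/
def MaxPath (G : SimpleGraph V) (S : Set V) (l : List V) : Prop :=
  PathIn G S l ∧ ∀ l', PathIn G S l' → l'.length ≤ l.length

/-- A longest path `x A y D` with a chord from its first vertex `x` to `y`. -/
def Good (G : SimpleGraph V) (S : Set V) (x : V) (A : List V) (y : V) (D : List V) : Prop :=
  MaxPath G S (x :: (A ++ y :: D)) ∧ A ≠ [] ∧ G.Adj x y

theorem single_connected (G : SimpleGraph V) (a : V) : (G.induce ({a} : Set V)).Connected := by
  have : Nonempty ({a} : Set V) := ⟨⟨a, rfl⟩⟩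
  exact ⟨SimpleGraph.Preconnected.of_subsingleton⟩

theorem chain_connected (G : SimpleGraph V) (l : List V) (hl : l.IsChain G.Adj) (hne : l ≠ []) :
    (G.induce {v | v ∈ l}).Connected := by
  induction l with
  | nil => exact absurd rfl hne
  | cons a t ih =>
    cases t with
    | nil =>
      have : {v | v ∈ [a]} = ({a} : Set V) := by ext; simp
      rw [this]
      exact KrAux.single_connected G a
    | cons b t =>
      have h2 := ih hl.tail (by simp)
      have hab : G.Adj a b := by
        rw [List.isChain_cons_cons] at hl; exact hl.1
      have : {v | v ∈ a :: b :: t} = ({a} : Set V) ∪ {v | v ∈ b :: t} := by ext; simp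
      rw [this]
      exact SimpleGraph.connected_induce_union
        (single_connected G a).preconnected h2.preconnected
        (v := a) (w := b) (by simp) (by simp) hab

theorem exists_max [Fintype V] (G : SimpleGraph V) (S : Set V) : ∃ l, MaxPath G S l := by
  have hb : ∀ n ∈ {n | ∃ l, PathIn G S l ∧ l.length = n}, n ≤ Fintype.card V := by
    rintro n ⟨l, hl, rfl⟩
    exact hl.2.1.length_le_card
  have hne : {n | ∃ l, PathIn G S l ∧ l.length = n}.Nonempty :=
    ⟨0, [], ⟨by simp, by simp, by simp⟩, rfl⟩
  obtain ⟨l, hl, hlen⟩ := Nat.sSup_mem hne ⟨_, hb⟩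
  refine ⟨l, hl, fun l' hl' => ?_⟩
  rw [hlen]
  exact le_csSup ⟨_, hb⟩ ⟨l', hl', rfl⟩

theorem nbr_mem {G : SimpleGraph V} {S : Set V} {x : V} {t : List V} (h : MaxPath G S (x :: t))
    {z : V} (hz : z ∈ S) (hxz : G.Adj x z) : z ∈ t := by
  by_contra hzt
  obtain ⟨⟨h1, h2, h3⟩, h4⟩ := h
  have := h4 (z :: x :: t) ⟨by
      rw [List.isChain_cons_cons]; exact ⟨hxz.symm, h1⟩, by
      rw [List.nodup_cons]
      exact ⟨by simp [hzt, hxz.ne'], h2⟩, by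
      intro w hw
      rcases List.mem_cons.1 hw with rfl | hw
      · exact hz
      · exact h3 w hw⟩
  simp at this

theorem exists_nbr [Fintype V] {G : SimpleGraph V} {S : Set V} {x : V} (F : Finset V)
    (h : F.card < (S ∩ G.neighborSet x).ncard) : ∃ z ∈ S, G.Adj x z ∧ z ∉ F := by
  rw [← Set.ncard_coe_finset F] at h
  obtain ⟨z, hz, hzF⟩ := Set.exists_mem_notMem_of_ncard_lt_ncard h
  exact ⟨z, hz.1, hz.2, by simpa using hzF⟩

theorem exists_good [Fintype V] (G : SimpleGraph V) (S : Set V) (hne : S.Nonempty)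
    (hS : ∀ x ∈ S, 2 ≤ (S ∩ G.neighborSet x).ncard) : ∃ x A y D, Good G S x A y D := by
  obtain ⟨l, hl⟩ := exists_max G S
  obtain ⟨s, hs⟩ := hne
  cases l with
  | nil =>
    have := hl.2 [s] ⟨by simp, by simp, by simpa using hs⟩
    simp at this
  | cons x t =>
    have hx := hS x (hl.1.2.2 x (by simp))
    cases t with
    | nil =>
      obtain ⟨z, hz, hxz, -⟩ := exists_nbr (G := G) (S := S) (x := x) ∅ (by simp; omega)
      have := nbr_mem hl hz hxz
      simp at this
    | cons b t =>
      obtain ⟨z, hz, hxz, hzb⟩ := exists_nbr (G := G) (S := S) (x := x) {b} (by simp; omega)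
      have hm := nbr_mem hl hz hxz
      have hzt : z ∈ t := by
        rcases List.mem_cons.1 hm with h | h
        · simp [h] at hzb
        · exact h
      obtain ⟨s, D, rfl⟩ := List.append_of_mem hzt
      exact ⟨x, b :: s, z, D, hl, by simp, hxz⟩

/-- With the first chord as short as possible, the first vertex has a neighbour beyond it. -/
theorem far_nbr [Fintype V] {G : SimpleGraph V} {S : Set V}
    (hS : ∀ x ∈ S, 3 ≤ (S ∩ G.neighborSet x).ncard) {x y : V} {A D : List V}
    (h : Good G S x A y D)
    (hmin : ∀ x' A' y' D', Good G S x' A' y' D' → A.length ≤ A'.length) :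
    ∃ d ∈ D, G.Adj x d := by
  obtain ⟨hl, hA, hxy⟩ := h
  have hx := hS x (hl.1.2.2 x (by simp))
  cases A with
  | nil => exact absurd rfl hA
  | cons b A =>
    obtain ⟨z, hz, hxz, hzF⟩ := exists_nbr (G := G) (S := S) (x := x) {b, y}
      (lt_of_le_of_lt Finset.card_le_two (by omega))
    have hm := nbr_mem hl hz hxz
    simp only [Finset.mem_insert, Finset.mem_singleton, not_or] at hzF
    simp only [List.cons_append, List.mem_cons, List.mem_append, hzF.1, hzF.2, false_or] at hm
    rcases hm with hm | hm
    · obtain ⟨s, t, rfl⟩ := List.append_of_mem hm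
      have := hmin x (b :: s) z (t ++ y :: D) ⟨by simpa using hl, by simp, hxz⟩
      simp at this
    · exact ⟨z, hm, hxz⟩

/-- Rotation of the path along the chord. -/
theorem rotate {G : SimpleGraph V} {S : Set V} {x y a : V} {A D : List V}
    (h : Good G S x (A ++ [a]) y D) : Good G S a (A.reverse ++ [x]) y D := by
  obtain ⟨⟨⟨h1, h2, h3⟩, h4⟩, -, hxy⟩ := h
  have hperm : (a :: ((A.reverse ++ [x]) ++ y :: D)).Perm (x :: ((A ++ [a]) ++ y :: D)) := by
    have e1 : a :: ((A.reverse ++ [x]) ++ y :: D) = (x :: (A ++ [a])).reverse ++ y :: D := by simp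
    have e2 : x :: ((A ++ [a]) ++ y :: D) = (x :: (A ++ [a])) ++ y :: D := by simp
    rw [e1, e2]
    exact (List.reverse_perm _).append_right _
  have e1 : a :: ((A.reverse ++ [x]) ++ y :: D) = (x :: (A ++ [a])).reverse ++ y :: D := by simp
  have e2 : x :: ((A ++ [a]) ++ y :: D) = (x :: (A ++ [a])) ++ y :: D := by simp
  have hc := h1
  rw [e2, List.isChain_append] at hc
  refine ⟨⟨⟨?_, hperm.nodup_iff.2 h2, fun w hw => h3 w (hperm.mem_iff.1 hw)⟩, ?_⟩, by simp, ?_⟩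
  · rw [e1, List.isChain_append]
    refine ⟨?_, hc.2.1, ?_⟩
    · rw [List.isChain_reverse]
      exact hc.1.imp fun _ _ h => h.symm
    · intro u hu v hv
      rw [List.getLast?_reverse] at hu
      simp at hu hv
      subst hu; subst hv
      exact hxy
  · intro l' hl'
    rw [hperm.length_eq]
    exact h4 l' hl'
  · exact hc.2.2 a (by simp [List.getLast?_cons]) y (by simp)

/-- Two disjoint sets joined by an edge. -/
def Touch (G : SimpleGraph V) (s t : Set V) : Prop :=
  Disjoint s t ∧ ∃ x ∈ s, ∃ y ∈ t, G.Adj x y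

theorem minor_of_list (G : SimpleGraph V) (L : List (Set V))
    (hc : ∀ s ∈ L, (G.induce s).Connected) (hp : L.Pairwise (Touch G)) :
    HasMinor G (⊤ : SimpleGraph (Fin L.length)) := by
  have hp' : ∀ i j : Fin L.length, i ≠ j → Touch G (L.get i) (L.get j) := by
    intro i j hij
    rw [List.pairwise_iff_get] at hp
    rcases lt_or_gt_of_ne hij with h | h
    · exact hp i j h
    · obtain ⟨h1, x, hx, y, hy, hxy⟩ := hp j i h
      exact ⟨h1.symm, y, hy, x, hx, hxy.symm⟩
  refine ⟨L.get, fun i => ?_, fun i j hij => (hp' i j hij).1, fun i => hc _ (L.get_mem i),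
    fun i j hij => (hp' i j hij).2⟩
  obtain ⟨x⟩ := (hc _ (L.get_mem i)).nonempty
  exact ⟨x.1, x.2⟩

theorem touch_cone {G : SimpleGraph V} {v : V} {s : Set V} (hs : s ⊆ G.neighborSet v)
    (hne : s.Nonempty) : Touch G {v} s := by
  obtain ⟨x, hx⟩ := hne
  refine ⟨?_, v, rfl, x, hx, hs hx⟩
  rw [Set.disjoint_singleton_left]
  intro h
  exact G.loopless.irrefl v (hs h)

theorem minor_cone (G : SimpleGraph V) (v : V) (L : List (Set V))
    (hc : ∀ s ∈ L, (G.induce s).Connected) (hp : L.Pairwise (Touch G))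
    (hv : ∀ s ∈ L, s ⊆ G.neighborSet v) :
    HasMinor G (⊤ : SimpleGraph (Fin (L.length + 1))) := by
  refine minor_of_list G ({v} :: L) ?_ ?_
  · intro s hs
    rcases List.mem_cons.1 hs with rfl | hs
    · exact KrAux.single_connected G v
    · exact hc s hs
  · refine List.pairwise_cons.2 ⟨fun s hs => touch_cone (hv s hs) ?_, hp⟩
    obtain ⟨x⟩ := (hc _ hs).nonempty
    exact ⟨x.1, x.2⟩

theorem k3_in (G : SimpleGraph V) (S : Set V) {x y : V} {A D : List V} (h : Good G S x A y D) :
    ∃ L : List (Set V), L = [{x}, {v | v ∈ A}, {y}] ∧ (∀ s ∈ L, (G.induce s).Connected) ∧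
      L.Pairwise (Touch G) ∧ ∀ s ∈ L, s ⊆ S := by
  obtain ⟨⟨⟨h1, h2, h3⟩, -⟩, hA, hxy⟩ := h
  obtain ⟨b, A', rfl⟩ := List.exists_cons_of_ne_nil hA
  have hxb : G.Adj x b := by
    rw [List.cons_append, List.isChain_cons_cons] at h1; exact h1.1
  have hc := h1.tail
  simp only [List.tail_cons] at hc
  rw [List.isChain_append] at hc
  have hay : G.Adj ((b :: A').getLast hA) y :=
    hc.2.2 _ (by rw [List.getLast?_eq_some_getLast hA]; rfl) y (by simp)
  rw [List.nodup_cons, List.nodup_append] at h2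
  refine ⟨_, rfl, ?_, ?_, ?_⟩
  · intro s hs
    simp only [List.mem_cons, List.not_mem_nil, or_false] at hs
    rcases hs with rfl | rfl | rfl
    · exact KrAux.single_connected G x
    · have e : {v | v = b ∨ v ∈ A'} = {v | v ∈ b :: A'} := by ext; simp
      rw [e]
      exact chain_connected G _ hc.1 hA
    · exact KrAux.single_connected G y
  · simp only [List.pairwise_cons, List.mem_cons, List.not_mem_nil, or_false, forall_eq_or_imp,
      forall_eq, implies_true, and_true, List.Pairwise.nil, IsEmpty.forall_iff]
    refine ⟨⟨⟨?_, x, rfl, b, by simp, hxb⟩, ⟨?_, x, rfl, y, rfl, hxy⟩⟩, ⟨?_, _, ?_, y, rfl, hay⟩⟩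
    · rw [Set.disjoint_singleton_left]
      intro hx
      exact h2.1 (List.mem_append_left _ (by simpa using hx))
    · simpa using hxy.ne
    · rw [Set.disjoint_singleton_right]
      intro hy
      exact h2.2.2.2 y (by simpa using hy) y (by simp) rfl
    · exact List.mem_cons.1 (List.getLast_mem hA)
  · intro s hs
    simp only [List.mem_cons, List.not_mem_nil, or_false] at hs
    rcases hs with rfl | rfl | rfl
    · rintro _ rfl; exact h3 _ (by simp)
    · intro w hw
      exact h3 w (List.mem_cons_of_mem _ (List.mem_append_left _ (by simpa using hw)))
    · rintro _ rfl; exact h3 _ (by simp)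

theorem k4_in [Fintype V] (G : SimpleGraph V) (S : Set V) (hne : S.Nonempty)
    (hS : ∀ x ∈ S, 3 ≤ (S ∩ G.neighborSet x).ncard) :
    ∃ L : List (Set V), L.length = 4 ∧ (∀ s ∈ L, (G.induce s).Connected) ∧
      L.Pairwise (Touch G) ∧ ∀ s ∈ L, s ⊆ S := by
  have hex : ∃ n, ∃ x A y D, Good G S x A y D ∧ A.length = n := by
    obtain ⟨x, A, y, D, h⟩ := exists_good G S hne (fun x hx => by have := hS x hx; omega)
    exact ⟨_, x, A, y, D, h, rfl⟩
  obtain ⟨x, A, y, D, h, hlen⟩ := Nat.find_spec hex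
  have hmin : ∀ x' A' y' D', Good G S x' A' y' D' → A.length ≤ A'.length := by
    intro x' A' y' D' h'
    rw [hlen]
    exact Nat.find_min' hex ⟨x', A', y', D', h', rfl⟩
  obtain ⟨d, hd, hxd⟩ := far_nbr hS h hmin
  obtain ⟨A0, a, rfl⟩ : ∃ A0 a, A = A0 ++ [a] :=
    ⟨_, _, (List.dropLast_append_getLast h.2.1).symm⟩
  obtain ⟨e, he, hae⟩ := far_nbr hS (rotate h) (by simpa using hmin)
  obtain ⟨L, rfl, hc, hp, hs⟩ := k3_in G S h
  obtain ⟨⟨⟨h1, h2, h3⟩, -⟩, hA, hxy⟩ := h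
  have hDne : D ≠ [] := List.ne_nil_of_mem hd
  obtain ⟨c, D', rfl⟩ := List.exists_cons_of_ne_nil hDne
  have e2 : x :: ((A0 ++ [a]) ++ y :: c :: D') = (x :: (A0 ++ [a])) ++ y :: c :: D' := by simp
  rw [e2, List.isChain_append] at h1
  have hyD := h1.2.1
  rw [List.isChain_cons_cons] at hyD
  rw [e2, List.nodup_append] at h2
  have hdis : ∀ w ∈ x :: (A0 ++ [a]), w ∉ c :: D' := fun w hw hw' =>
    h2.2.2 w hw w (List.mem_cons_of_mem _ hw') rfl
  refine ⟨[{x}, {v | v ∈ A0 ++ [a]}, {y}] ++ [{v | v ∈ c :: D'}], rfl, ?_, ?_, ?_⟩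
  · intro s hs
    rcases List.mem_append.1 hs with hs | hs
    · exact hc s hs
    · rw [List.mem_singleton.1 hs]
      exact chain_connected G _ hyD.2 hDne
  · refine List.pairwise_append.2 ⟨hp, List.pairwise_singleton _ _, ?_⟩
    intro s hs t ht
    rw [List.mem_singleton.1 ht]
    simp only [List.mem_cons, List.not_mem_nil, or_false] at hs
    rcases hs with rfl | rfl | rfl
    · refine ⟨?_, x, rfl, d, hd, hxd⟩
      rw [Set.disjoint_singleton_left]
      exact hdis x (by simp)
    · refine ⟨?_, a, by simp, e, he, hae⟩
      rw [Set.disjoint_left]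
      intro w hw
      exact hdis w (List.mem_cons_of_mem _ hw)
    · refine ⟨?_, y, rfl, c, by simp, hyD.1⟩
      rw [Set.disjoint_singleton_left]
      exact (List.nodup_cons.1 h2.2.1).1
  · intro s hs'
    rcases List.mem_append.1 hs' with hs' | hs'
    · exact hs s hs'
    · rw [List.mem_singleton.1 hs']
      intro w hw
      exact h3 w (List.mem_cons_of_mem _ (List.mem_append_right _ (List.mem_cons_of_mem _ hw)))

end KrAux

/-- For `3 ≤ r ≤ 5`: if `G` has an edge and every edge of `G` belongs to at least
`r - 2` triangles (i.e. the endpoints of every edge have at least `r - 2` common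
neighbors), then `G` has a `K_r` minor. -/
theorem hasKrMinor_of_edges_in_triangles {V : Type*} [Fintype V] (G : SimpleGraph V)
    (r : ℕ) (hr3 : 3 ≤ r) (hr5 : r ≤ 5)
    (hedge : G.edgeSet.Nonempty)
    (htri : ∀ v u : V, G.Adj v u → r - 2 ≤ (G.neighborSet v ∩ G.neighborSet u).ncard) :
    HasMinor G (⊤ : SimpleGraph (Fin r)) := by
  obtain ⟨e, he⟩ := hedge
  induction e with
  | h v u =>
  have hvu : G.Adj v u := he
  have hne : (G.neighborSet v).Nonempty := ⟨u, hvu⟩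
  have hS : ∀ x ∈ G.neighborSet v, r - 2 ≤ (G.neighborSet v ∩ G.neighborSet x).ncard :=
    fun x hx => htri v x hx
  obtain rfl | rfl | rfl : r = 3 ∨ r = 4 ∨ r = 5 := by omega
  · obtain ⟨z, hz, huz, -⟩ := KrAux.exists_nbr (G := G) (S := G.neighborSet v) (x := u) ∅
      (by have := hS u hvu; simp only [Finset.card_empty]; omega)
    refine KrAux.minor_cone G v [{u}, {z}] ?_ ?_ ?_
    · intro s hs
      simp only [List.mem_cons, List.not_mem_nil, or_false] at hs
      rcases hs with rfl | rfl <;> exact KrAux.single_connected G _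
    · refine List.pairwise_pair.2 ⟨?_, u, rfl, z, rfl, huz⟩
      simpa using huz.ne
    · intro s hs
      simp only [List.mem_cons, List.not_mem_nil, or_false] at hs
      rcases hs with rfl | rfl
      · rintro _ rfl; exact hvu
      · rintro _ rfl; exact hz
  · obtain ⟨x, A, y, D, h⟩ := KrAux.exists_good G _ hne hS
    obtain ⟨L, rfl, hc, hp, hs⟩ := KrAux.k3_in G _ h
    exact KrAux.minor_cone G v _ hc hp hs
  · obtain ⟨L, hL, hc, hp, hs⟩ := KrAux.k4_in G _ hne hS
    have := KrAux.minor_cone G v _ hc hp hs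
    rwa [hL] at this
end
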